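/- arXiv:2305.06887 — 2 statements merged into one kernel-verified Lean document; each statement's English description precedes it below -/
import Mathlib

section
/- Let n ≥ 1, κ > 0, and let (X, Y) be jointly Gaussian random vectors on ℝ^n × ℝ^n with positive-definite joint covariance matrix K having blocks K_X, K_Y, K_XY, K_YX. Let Z ~ N(0, κ I_n) be independent of (X, Y) and set U = X + Z. Define the conditional covariance matrix K_{X|Y} = K_X − K_XY K_Y^{-1} K_YX, with eigenvalues λ_1^{(X|Y)}, …, λ_n^{(X|Y)}. Then I(U; X) − I(U; Y) = (1/2) Σ_{i=1}^n log((λ_i^{(X|Y)} + κ)/κ), where for jointly distributed random vectors A, B the mutual information I(A;B) is the Kullback–Leibler divergence D(P_{AB} ‖ P_A ⊗ P_B). -/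
open MeasureTheory
open scoped Matrix

noncomputable section

/-- Density of the multivariate Gaussian `N(m, S)` with respect to Lebesgue measure. -/
def gaussDensity {ι : Type*} [Fintype ι] [DecidableEq ι]
    (m : ι → ℝ) (S : Matrix ι ι ℝ) (x : ι → ℝ) : ℝ :=
  (2 * Real.pi) ^ (-(Fintype.card ι : ℝ) / 2) * S.det ^ (-(1 : ℝ) / 2) *
    Real.exp (-(1 / 2) * ((x - m) ⬝ᵥ S⁻¹ *ᵥ (x - m)))

/-- The multivariate Gaussian measure `N(m, S)` on `ℝ^ι`. -/
def gaussMeasure {ι : Type*} [Fintype ι] [DecidableEq ι]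
    (m : ι → ℝ) (S : Matrix ι ι ℝ) : Measure (ι → ℝ) :=
  volume.withDensity fun x => ENNReal.ofReal (gaussDensity m S x)

/-- Kullback–Leibler divergence `D(μ‖ν) = ∫ log (dμ/dν) dμ` (for `μ ≪ ν`). -/
def KLdiv {E : Type*} [MeasurableSpace E] (μ ν : Measure E) : ℝ :=
  ∫ x, Real.log ((μ.rnDeriv ν) x).toReal ∂μ

/-!
For a jointly Gaussian pair with covariance blocks `A`, `B`, `C`, `D`, the product of the marginals
is the Gaussian with covariance `diag (A, D)`, so its divergence from the joint law, and hence the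
mutual information, is `½ log (det A / det (A - B D⁻¹ C))`: the determinant of the covariance of the
first component over that of its conditional covariance given the second. Both pairs `(U, X)` and
`(U, Y)` are jointly Gaussian with first component `U`, so `det K_U` cancels in the difference.
Given `X`, the conditional covariance of `U` is `κ I`; given `Y`, it is `K_{X|Y} + κ I`. What is
left is `½ log (det (K_{X|Y} + κ I) / det (κ I))`, which factors over the eigenvalues of `K_{X|Y}`.
-/

open ProbabilityTheory
open scoped MatrixOrder

lemma map_withDensity_comp {α β : Type*} [MeasurableSpace α] [MeasurableSpace β]
    (μ : Measure α) {f : α → β} (hf : Measurable f) {g : β → ENNReal} (hg : Measurable g) :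
    (μ.withDensity fun x => g (f x)).map f = (μ.map f).withDensity g := by
  ext s hs
  rw [Measure.map_apply hf hs, withDensity_apply _ hs, withDensity_apply _ (hf hs),
    setLIntegral_map hs hg hf]

section Density

variable {ι : Type*} [Fintype ι] [DecidableEq ι]

lemma measurable_gaussDensity (m : ι → ℝ) (S : Matrix ι ι ℝ) : Measurable (gaussDensity m S) := by
  unfold gaussDensity
  fun_prop

lemma gaussDensity_pos (m : ι → ℝ) {S : Matrix ι ι ℝ} (hS : 0 < S.det) (x : ι → ℝ) :
    0 < gaussDensity m S x := by
  unfold gaussDensity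
  positivity

lemma log_gaussDensity (m : ι → ℝ) {S : Matrix ι ι ℝ} (hS : 0 < S.det) (x : ι → ℝ) :
    Real.log (gaussDensity m S x) =
      -(1 / 2) * (Fintype.card ι * Real.log (2 * Real.pi) + Real.log S.det +
        (x - m) ⬝ᵥ S⁻¹ *ᵥ (x - m)) := by
  unfold gaussDensity
  rw [Real.log_mul (by positivity) (Real.exp_ne_zero _),
    Real.log_mul (by positivity) (by positivity), Real.log_exp, Real.log_rpow (by positivity),
    Real.log_rpow hS]
  ring

lemma prod_gaussianPDFReal (x : ι → ℝ) :
    ∏ i, gaussianPDFReal 0 1 (x i) = gaussDensity 0 1 x := by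
  have hsqrt : (√(2 * Real.pi))⁻¹ = (2 * Real.pi) ^ (-(1 : ℝ) / 2) := by
    rw [Real.sqrt_eq_rpow, ← Real.rpow_neg (by positivity), neg_div]
  have hconst : ((2 * Real.pi) ^ (-(1 : ℝ) / 2)) ^ Fintype.card ι =
      (2 * Real.pi) ^ (-(Fintype.card ι : ℝ) / 2) := by
    rw [← Real.rpow_mul_natCast (by positivity)]
    ring_nf
  have hexp : ∑ i, -(x i) ^ 2 / 2 = -(1 / 2) * (x ⬝ᵥ x) := by
    simp only [dotProduct, Finset.mul_sum]
    exact Finset.sum_congr rfl fun i _ => by ring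
  simp only [gaussianPDFReal, gaussDensity, sub_zero, NNReal.coe_one, mul_one, hsqrt,
    Finset.prod_mul_distrib, Finset.prod_const, Finset.card_univ, hconst, ← Real.exp_sum, hexp,
    Matrix.det_one, Real.one_rpow, inv_one, Matrix.one_mulVec]

lemma gaussMeasure_zero_one :
    gaussMeasure (0 : ι → ℝ) 1 = Measure.pi fun _ => gaussianReal 0 1 := by
  refine (Measure.pi_eq fun s hs => ?_).symm
  rw [gaussMeasure, withDensity_apply _ (MeasurableSet.univ_pi hs), volume_pi,
    Measure.restrict_pi_pi]
  simp_rw [← prod_gaussianPDFReal]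
  rw [← ofReal_integral_eq_lintegral_ofReal
      (Integrable.fintype_prod fun _ => (integrable_gaussianPDFReal 0 1).restrict)
      (.of_forall fun _ => Finset.prod_nonneg fun _ _ => gaussianPDFReal_nonneg _ _ _),
    integral_fintype_prod_eq_prod (f := fun _ => gaussianPDFReal 0 1),
    ENNReal.ofReal_prod_of_nonneg fun _ _ => integral_nonneg (gaussianPDFReal_nonneg 0 1)]
  exact Finset.prod_congr rfl fun i _ => (gaussianReal_apply_eq_integral _ one_ne_zero _).symm

end Density

section AffineImage

variable {ι : Type*} [Fintype ι] [DecidableEq ι]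

lemma mulVec_dotProduct_inv_mul_transpose_mulVec {𝕜 : Type*} [CommRing 𝕜] {R : Matrix ι ι 𝕜}
    (hR : IsUnit R.det) (z : ι → 𝕜) :
    (R *ᵥ z) ⬝ᵥ (R * Rᵀ)⁻¹ *ᵥ (R *ᵥ z) = z ⬝ᵥ z := by
  rw [Matrix.mulVec_mulVec, Matrix.mul_inv_rev, Matrix.mul_assoc, Matrix.nonsing_inv_mul _ hR,
    mul_one, Matrix.dotProduct_mulVec, ← Matrix.mulVec_transpose, Matrix.mulVec_mulVec,
    ← Matrix.transpose_nonsing_inv, Matrix.transpose_transpose, Matrix.nonsing_inv_mul _ hR,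
    Matrix.one_mulVec]

variable {R : Matrix ι ι ℝ}

lemma gaussDensity_add_mulVec (m : ι → ℝ) (hR : R.det ≠ 0) (z : ι → ℝ) :
    |R.det| * gaussDensity m (R * Rᵀ) (m + R *ᵥ z) = gaussDensity 0 1 z := by
  have hdet : (R.det * R.det) ^ (-(1 : ℝ) / 2) = |R.det|⁻¹ := by
    rw [← abs_mul_abs_self, neg_div, Real.rpow_neg (by positivity), ← Real.sqrt_eq_rpow,
      Real.sqrt_mul_self (abs_nonneg _)]
  have hR' : |R.det| ≠ 0 := abs_ne_zero.2 hR
  simp only [gaussDensity, add_sub_cancel_left,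
    mulVec_dotProduct_inv_mul_transpose_mulVec hR.isUnit, Matrix.det_mul, Matrix.det_transpose,
    hdet, Matrix.det_one, Real.one_rpow, inv_one, Matrix.one_mulVec, sub_zero]
  field_simp

lemma map_add_mulVec_volume (m : ι → ℝ) (hR : R.det ≠ 0) :
    (volume : Measure (ι → ℝ)).map (fun z => m + R *ᵥ z) =
      ENNReal.ofReal |R.det⁻¹| • volume := by
  change volume.map ((fun z => m + z) ∘ Matrix.toLin' R) = _
  rw [← Measure.map_map (by fun_prop) (Matrix.toLin' R).continuous_of_finiteDimensional.measurable,
    Real.map_matrix_volume_pi_eq_smul_volume_pi hR, Measure.map_smul, map_add_left_eq_self]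

lemma gaussMeasure_mul_transpose (m : ι → ℝ) (hR : R.det ≠ 0) :
    gaussMeasure m (R * Rᵀ) = (gaussMeasure 0 1).map fun z => m + R *ᵥ z := by
  have hg : Measurable fun x => ENNReal.ofReal (|R.det| * gaussDensity m (R * Rᵀ) x) :=
    ((measurable_gaussDensity _ _).const_mul _).ennreal_ofReal
  have hcancel : ENNReal.ofReal |R.det⁻¹| * ENNReal.ofReal |R.det| = 1 := by
    rw [← ENNReal.ofReal_mul (abs_nonneg _), ← abs_mul, inv_mul_cancel₀ hR]
    simp
  symm
  calc (gaussMeasure 0 1).map (fun z => m + R *ᵥ z)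
      = (volume.map fun z => m + R *ᵥ z).withDensity
          fun x => ENNReal.ofReal (|R.det| * gaussDensity m (R * Rᵀ) x) := by
        simp_rw [gaussMeasure, ← gaussDensity_add_mulVec m hR]
        rw [map_withDensity_comp volume (f := fun z => m + R *ᵥ z) (by fun_prop) hg]
    _ = ENNReal.ofReal |R.det⁻¹| • ENNReal.ofReal |R.det| • gaussMeasure m (R * Rᵀ) := by
        simp_rw [map_add_mulVec_volume m hR, withDensity_smul_measure,
          ENNReal.ofReal_mul (abs_nonneg R.det)]
        exact congrArg _ (withDensity_smul' _ _ ENNReal.ofReal_ne_top)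
    _ = gaussMeasure m (R * Rᵀ) := by rw [smul_smul, hcancel, one_smul]

lemma gaussMeasure_eq_map_multivariateGaussian (m : ι → ℝ) {S : Matrix ι ι ℝ} (hS : S.PosDef) :
    gaussMeasure m S = (multivariateGaussian (WithLp.toLp 2 m) S).map WithLp.ofLp := by
  have hsq : CFC.sqrt S * (CFC.sqrt S)ᵀ = S := by
    rw [← Matrix.conjTranspose_eq_transpose_of_trivial, ← Matrix.star_eq_conjTranspose,
      (CFC.sqrt_nonneg S).isSelfAdjoint.star_eq, CFC.sqrt_mul_sqrt_self S hS.posSemidef.nonneg]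
  have hdet : (CFC.sqrt S).det ≠ 0 := by
    intro h
    exact hS.det_pos.ne' (by rw [← hsq, Matrix.det_mul, h, zero_mul])
  conv_lhs => rw [← hsq, gaussMeasure_mul_transpose m hdet, gaussMeasure_zero_one]
  rw [multivariateGaussian, ← map_pi_eq_stdGaussian, Measure.map_map (by fun_prop) (by fun_prop),
    Measure.map_map (by fun_prop) (by fun_prop)]
  rfl

lemma isProbabilityMeasure_gaussMeasure (m : ι → ℝ) {S : Matrix ι ι ℝ} (hS : S.PosDef) :
    IsProbabilityMeasure (gaussMeasure m S) := by
  rw [gaussMeasure_eq_map_multivariateGaussian m hS]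
  exact Measure.isProbabilityMeasure_map (by fun_prop)

end AffineImage

section LinearImage

lemma charFun_map_linearMap {E F : Type*} [NormedAddCommGroup E] [InnerProductSpace ℝ E]
    [FiniteDimensional ℝ E] [MeasurableSpace E] [BorelSpace E] [NormedAddCommGroup F]
    [InnerProductSpace ℝ F] [FiniteDimensional ℝ F] [MeasurableSpace F] [BorelSpace F]
    (μ : Measure E) (L : E →ₗ[ℝ] F) (t : F) :
    charFun (μ.map L) t = charFun μ (L.adjoint t) := by
  have hL : AEMeasurable L μ := L.continuous_of_finiteDimensional.measurable.aemeasurable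
  rw [charFun_apply, charFun_apply, integral_map hL (by fun_prop)]
  simp_rw [LinearMap.adjoint_inner_right]

variable {ι κ : Type*} [Fintype ι] [DecidableEq ι] [Fintype κ] [DecidableEq κ]

lemma map_toEuclideanLin_multivariateGaussian (μ : EuclideanSpace ℝ ι) {S : Matrix ι ι ℝ}
    (hS : S.PosSemidef) (M : Matrix κ ι ℝ) :
    (multivariateGaussian μ S).map (Matrix.toEuclideanLin M) =
      multivariateGaussian (Matrix.toEuclideanLin M μ) (M * S * Mᴴ) := by
  refine Measure.ext_of_charFun (funext fun t => ?_)
  have hquad : (Mᴴ *ᵥ t) ⬝ᵥ S *ᵥ (Mᴴ *ᵥ t) = t ⬝ᵥ (M * S * Mᴴ) *ᵥ t := by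
    rw [Matrix.conjTranspose_eq_transpose_of_trivial, ← Matrix.mulVec_mulVec,
      ← Matrix.mulVec_mulVec, Matrix.dotProduct_mulVec t, Matrix.mulVec_transpose]
  rw [charFun_map_linearMap, charFun_multivariateGaussian hS,
    charFun_multivariateGaussian (hS.mul_mul_conjTranspose_same M), LinearMap.adjoint_inner_left,
    ← Matrix.toEuclideanLin_conjTranspose_eq_adjoint, ← hquad]
  rfl

lemma multivariateGaussian_conv (μ ν : EuclideanSpace ℝ ι) {S T : Matrix ι ι ℝ}
    (hS : S.PosSemidef) (hT : T.PosSemidef) :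
    multivariateGaussian μ S ∗ multivariateGaussian ν T = multivariateGaussian (μ + ν) (S + T) := by
  refine Measure.ext_of_charFun (funext fun t => ?_)
  rw [charFun_conv, charFun_multivariateGaussian hS, charFun_multivariateGaussian hT,
    charFun_multivariateGaussian (hS.add hT), ← Complex.exp_add, inner_add_right, Matrix.add_mulVec,
    dotProduct_add]
  push_cast
  ring_nf

lemma map_mulVec_gaussMeasure (m : ι → ℝ) {S : Matrix ι ι ℝ} (hS : S.PosDef) (P : Matrix κ ι ℝ)
    (h : (P * S * Pᵀ).PosDef) :
    (gaussMeasure m S).map (P *ᵥ ·) = gaussMeasure (P *ᵥ m) (P * S * Pᵀ) := by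
  have hP : Measurable (Matrix.toEuclideanLin P) :=
    (Matrix.toEuclideanLin P).continuous_of_finiteDimensional.measurable
  rw [gaussMeasure_eq_map_multivariateGaussian m hS, gaussMeasure_eq_map_multivariateGaussian _ h,
    ← Matrix.conjTranspose_eq_transpose_of_trivial]
  change _ = (multivariateGaussian (Matrix.toEuclideanLin P (WithLp.toLp 2 m)) _).map _
  rw [← map_toEuclideanLin_multivariateGaussian _ hS.posSemidef, Measure.map_map (by fun_prop) hP,
    Measure.map_map (by fun_prop) (by fun_prop)]
  rfl

lemma map_mulVec_add_mulVec_gaussMeasure {τ : Type*} [Fintype τ] [DecidableEq τ]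
    (m : ι → ℝ) {S : Matrix ι ι ℝ} (hS : S.PosDef) (m' : κ → ℝ) {T : Matrix κ κ ℝ} (hT : T.PosDef)
    (P : Matrix τ ι ℝ) (Q : Matrix τ κ ℝ) (h : (P * S * Pᵀ + Q * T * Qᵀ).PosDef) :
    ((gaussMeasure m S).prod (gaussMeasure m' T)).map (fun w => P *ᵥ w.1 + Q *ᵥ w.2) =
      gaussMeasure (P *ᵥ m + Q *ᵥ m') (P * S * Pᵀ + Q * T * Qᵀ) := by
  have hP : Measurable (Matrix.toEuclideanLin P) :=
    (Matrix.toEuclideanLin P).continuous_of_finiteDimensional.measurable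
  have hQ : Measurable (Matrix.toEuclideanLin Q) :=
    (Matrix.toEuclideanLin Q).continuous_of_finiteDimensional.measurable
  have hlaw : multivariateGaussian (WithLp.toLp 2 (P *ᵥ m + Q *ᵥ m')) (P * S * Pᵀ + Q * T * Qᵀ) =
      (multivariateGaussian (WithLp.toLp 2 m) S).map (Matrix.toEuclideanLin P) ∗
        (multivariateGaussian (WithLp.toLp 2 m') T).map (Matrix.toEuclideanLin Q) := by
    rw [map_toEuclideanLin_multivariateGaussian _ hS.posSemidef,
      map_toEuclideanLin_multivariateGaussian _ hT.posSemidef,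
      multivariateGaussian_conv _ _ (hS.posSemidef.mul_mul_conjTranspose_same P)
        (hT.posSemidef.mul_mul_conjTranspose_same Q)]
    simp only [Matrix.conjTranspose_eq_transpose_of_trivial]
    rfl
  rw [gaussMeasure_eq_map_multivariateGaussian m hS, gaussMeasure_eq_map_multivariateGaussian m' hT,
    gaussMeasure_eq_map_multivariateGaussian _ h, hlaw, Measure.conv,
    Measure.map_prod_map _ _ hP hQ, Measure.map_prod_map _ _ (by fun_prop) (by fun_prop)]
  repeat rw [Measure.map_map (by fun_prop) (by fun_prop)]
  rfl

end LinearImage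

section Moments

lemma dotProduct_mulVec_self_eq_sum {ι R : Type*} [Fintype ι] [CommSemiring R]
    (T : Matrix ι ι R) (x : ι → R) :
    x ⬝ᵥ T *ᵥ x = ∑ i, ∑ j, T i j * (x i * x j) := by
  simp only [dotProduct, Matrix.mulVec, Finset.mul_sum]
  exact Finset.sum_congr rfl fun i _ => Finset.sum_congr rfl fun j _ => by ring

variable {ι : Type*} [Fintype ι] [DecidableEq ι] (m : ι → ℝ) {S : Matrix ι ι ℝ}

lemma memLp_two_eval_gaussMeasure (hS : S.PosDef) (i : ι) :
    MemLp (fun x => x i) 2 (gaussMeasure m S) := by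
  have heval : Measurable fun x : ι → ℝ => x i := measurable_pi_apply i
  rw [gaussMeasure_eq_map_multivariateGaussian m hS,
    memLp_map_measure_iff heval.aestronglyMeasurable (by fun_prop)]
  exact IsGaussian.memLp_two_id.continuousLinearMap_comp (EuclideanSpace.proj (𝕜 := ℝ) i)

lemma integral_eval_gaussMeasure (hS : S.PosDef) (i : ι) : ∫ x, x i ∂gaussMeasure m S = m i := by
  have heval : Measurable fun x : ι → ℝ => x i := measurable_pi_apply i
  rw [gaussMeasure_eq_map_multivariateGaussian m hS,
    integral_map (by fun_prop) heval.aestronglyMeasurable]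
  calc ∫ x, EuclideanSpace.proj (𝕜 := ℝ) i x ∂multivariateGaussian (WithLp.toLp 2 m) S
      = EuclideanSpace.proj (𝕜 := ℝ) i (∫ x, x ∂multivariateGaussian (WithLp.toLp 2 m) S) :=
        ContinuousLinearMap.integral_comp_comm _ IsGaussian.integrable_id
    _ = m i := by simp

lemma covariance_eval_gaussMeasure (hS : S.PosDef) (i j : ι) :
    cov[fun x => x i, fun x => x j; gaussMeasure m S] = S i j := by
  rw [gaussMeasure_eq_map_multivariateGaussian m hS,
    covariance_map (measurable_pi_apply i).aestronglyMeasurable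
      (measurable_pi_apply j).aestronglyMeasurable (by fun_prop)]
  exact covariance_eval_multivariateGaussian hS.posSemidef i j

lemma integrable_sub_mul_sub_gaussMeasure (hS : S.PosDef) (c : ι → ℝ) (i j : ι) :
    Integrable (fun x => (x i - c i) * (x j - c j)) (gaussMeasure m S) := by
  have := isProbabilityMeasure_gaussMeasure m hS
  exact ((memLp_two_eval_gaussMeasure m hS i).sub (memLp_const _)).integrable_mul
    ((memLp_two_eval_gaussMeasure m hS j).sub (memLp_const _))

lemma integral_sub_mul_sub_gaussMeasure (hS : S.PosDef) (c : ι → ℝ) (i j : ι) :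
    ∫ x, (x i - c i) * (x j - c j) ∂gaussMeasure m S = S i j + (m i - c i) * (m j - c j) := by
  have := isProbabilityMeasure_gaussMeasure m hS
  have hint (k : ι) : Integrable (fun x : ι → ℝ => x k) (gaussMeasure m S) :=
    (memLp_two_eval_gaussMeasure m hS k).integrable one_le_two
  have hmean (k : ι) : ∫ x, (x k - c k) ∂gaussMeasure m S = m k - c k := by
    rw [integral_sub (hint k) (integrable_const _), integral_eval_gaussMeasure m hS]
    simp
  calc ∫ x, (x i - c i) * (x j - c j) ∂gaussMeasure m S
      = cov[fun x => x i - c i, fun x => x j - c j; gaussMeasure m S] +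
          (m i - c i) * (m j - c j) := by
        rw [← hmean i, ← hmean j]
        exact (sub_eq_iff_eq_add.1 (covariance_eq_sub
          ((memLp_two_eval_gaussMeasure m hS i).sub (memLp_const (c i)))
          ((memLp_two_eval_gaussMeasure m hS j).sub (memLp_const (c j)))).symm)
    _ = S i j + (m i - c i) * (m j - c j) := by
        rw [covariance_sub_const_left (hint i), covariance_sub_const_right (hint j),
          covariance_eval_gaussMeasure m hS]

lemma integrable_dotProduct_mulVec_gaussMeasure (hS : S.PosDef) (c : ι → ℝ) (T : Matrix ι ι ℝ) :
    Integrable (fun x => (x - c) ⬝ᵥ T *ᵥ (x - c)) (gaussMeasure m S) := by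
  simp_rw [dotProduct_mulVec_self_eq_sum]
  exact integrable_finsetSum _ fun i _ => integrable_finsetSum _ fun j _ =>
    (integrable_sub_mul_sub_gaussMeasure m hS c i j).const_mul _

lemma integral_dotProduct_mulVec_gaussMeasure (hS : S.PosDef) (c : ι → ℝ) (T : Matrix ι ι ℝ) :
    ∫ x, (x - c) ⬝ᵥ T *ᵥ (x - c) ∂gaussMeasure m S =
      (T * S).trace + (m - c) ⬝ᵥ T *ᵥ (m - c) := by
  have hint (i j : ι) : Integrable (fun x => T i j * ((x i - c i) * (x j - c j)))
      (gaussMeasure m S) := (integrable_sub_mul_sub_gaussMeasure m hS c i j).const_mul _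
  have htrace : (T * S).trace = ∑ i, ∑ j, T i j * S i j := by
    simp only [Matrix.trace, Matrix.diag, Matrix.mul_apply]
    exact Finset.sum_congr rfl fun i _ => Finset.sum_congr rfl fun j _ => by
      rw [← hS.isHermitian.apply i j, star_trivial]
  simp_rw [dotProduct_mulVec_self_eq_sum, htrace, ← Finset.sum_add_distrib, ← mul_add,
    Pi.sub_apply]
  rw [integral_finsetSum _ fun i _ => integrable_finsetSum _ fun j _ => hint i j]
  refine Finset.sum_congr rfl fun i _ => ?_
  rw [integral_finsetSum _ fun j _ => hint i j]
  refine Finset.sum_congr rfl fun j _ => ?_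
  rw [integral_const_mul, integral_sub_mul_sub_gaussMeasure m hS]

end Moments

section KullbackLeibler

lemma KLdiv_withDensity_ofReal {E : Type*} [MeasurableSpace E] {ρ : Measure E} [SigmaFinite ρ]
    {p q : E → ℝ} (hp : Measurable p) (hq : Measurable q) (hp0 : ∀ x, 0 < p x)
    (hq0 : ∀ x, 0 < q x) :
    KLdiv (ρ.withDensity fun x => ENNReal.ofReal (p x))
        (ρ.withDensity fun x => ENNReal.ofReal (q x)) =
      ∫ x, (Real.log (p x) - Real.log (q x)) ∂ρ.withDensity fun x => ENNReal.ofReal (p x) := by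
  set P := ρ.withDensity fun x => ENNReal.ofReal (p x)
  set Q := ρ.withDensity fun x => ENNReal.ofReal (q x)
  have hpq : Measurable fun x => ENNReal.ofReal (p x / q x) := (hp.div hq).ennreal_ofReal
  have hPQ : P = Q.withDensity fun x => ENNReal.ofReal (p x / q x) := by
    rw [← withDensity_mul _ hq.ennreal_ofReal hpq]
    refine congrArg ρ.withDensity (funext fun x => ?_)
    rw [Pi.mul_apply, ← ENNReal.ofReal_mul (hq0 x).le, mul_div_cancel₀ _ (hq0 x).ne']
  have hPQ_ac : P ≪ Q := hPQ ▸ withDensity_absolutelyContinuous Q _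
  have hrn : P.rnDeriv Q =ᵐ[P] fun x => ENNReal.ofReal (p x / q x) := by
    have h := Measure.rnDeriv_withDensity Q hpq
    exact hPQ_ac.ae_le (hPQ ▸ h)
  refine integral_congr_ae (hrn.mono fun x hx => ?_)
  dsimp only
  rw [hx, ENNReal.toReal_ofReal (div_pos (hp0 x) (hq0 x)).le,
    Real.log_div (hp0 x).ne' (hq0 x).ne']

lemma KLdiv_map_measurableEquiv {E F : Type*} [MeasurableSpace E] [MeasurableSpace F]
    {μ ν : Measure E} [SigmaFinite μ] [SigmaFinite ν] (hμν : μ ≪ ν) (e : E ≃ᵐ F) :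
    KLdiv (μ.map e) (ν.map e) = KLdiv μ ν := by
  unfold KLdiv
  rw [integral_map_equiv]
  refine integral_congr_ae (hμν.ae_le ?_)
  filter_upwards [e.measurableEmbedding.rnDeriv_map μ ν] with x hx
  rw [hx]

variable {ι : Type*} [Fintype ι] [DecidableEq ι]

lemma gaussMeasure_absolutelyContinuous (m m' : ι → ℝ) (S : Matrix ι ι ℝ) {S' : Matrix ι ι ℝ}
    (hS' : S'.PosDef) : gaussMeasure m S ≪ gaussMeasure m' S' :=
  (withDensity_absolutelyContinuous _ _).trans <|
    withDensity_absolutelyContinuous' (measurable_gaussDensity m' S').ennreal_ofReal.aemeasurable <|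
      .of_forall fun x => by simpa using gaussDensity_pos m' hS'.det_pos x

lemma KLdiv_gaussMeasure (m m' : ι → ℝ) {S S' : Matrix ι ι ℝ} (hS : S.PosDef) (hS' : S'.PosDef) :
    KLdiv (gaussMeasure m S) (gaussMeasure m' S') =
      1 / 2 * (Real.log S'.det - Real.log S.det + (S'⁻¹ * S).trace - Fintype.card ι +
        (m - m') ⬝ᵥ S'⁻¹ *ᵥ (m - m')) := by
  have := isProbabilityMeasure_gaussMeasure m hS
  have hlog (x : ι → ℝ) :
      Real.log (gaussDensity m S x) - Real.log (gaussDensity m' S' x) =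
        1 / 2 * (Real.log S'.det - Real.log S.det + ((x - m') ⬝ᵥ S'⁻¹ *ᵥ (x - m') -
          (x - m) ⬝ᵥ S⁻¹ *ᵥ (x - m))) := by
    rw [log_gaussDensity m hS.det_pos, log_gaussDensity m' hS'.det_pos]
    ring
  have hint (c : ι → ℝ) (T : Matrix ι ι ℝ) := integrable_dotProduct_mulVec_gaussMeasure m hS c T
  have hint_sub : Integrable (fun x => (x - m') ⬝ᵥ S'⁻¹ *ᵥ (x - m') - (x - m) ⬝ᵥ S⁻¹ *ᵥ (x - m))
      (gaussMeasure m S) := (hint _ _).sub (hint _ _)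
  calc KLdiv (gaussMeasure m S) (gaussMeasure m' S')
      = ∫ x, 1 / 2 * (Real.log S'.det - Real.log S.det + ((x - m') ⬝ᵥ S'⁻¹ *ᵥ (x - m') -
          (x - m) ⬝ᵥ S⁻¹ *ᵥ (x - m))) ∂gaussMeasure m S := by
        simp_rw [← hlog]
        exact KLdiv_withDensity_ofReal (measurable_gaussDensity m S) (measurable_gaussDensity m' S')
          (gaussDensity_pos m hS.det_pos) (gaussDensity_pos m' hS'.det_pos)
    _ = _ := by
        rw [integral_const_mul, integral_add (integrable_const _) hint_sub,
          integral_sub (hint _ _) (hint _ _), integral_dotProduct_mulVec_gaussMeasure m hS,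
          integral_dotProduct_mulVec_gaussMeasure m hS,
          Matrix.nonsing_inv_mul _ hS.det_pos.ne'.isUnit, integral_const]
        simp only [probReal_univ, one_smul, Matrix.trace_one, sub_self, Matrix.mulVec_zero,
          dotProduct_zero]
        ring

end KullbackLeibler

section BlockMatrix

variable {ι κ R : Type*} [Fintype ι] [DecidableEq ι] [Fintype κ] [DecidableEq κ] [CommRing R]
  {D : Matrix κ κ R}

lemma det_fromBlocks_eq_det_mul_det_schur (A : Matrix ι ι R) (B : Matrix ι κ R)
    (C : Matrix κ ι R) (hD : IsUnit D) :
    (Matrix.fromBlocks A B C D).det = D.det * (A - B * D⁻¹ * C).det := by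
  have := hD.invertible
  rw [Matrix.det_fromBlocks₂₂, Matrix.invOf_eq_nonsing_inv]

lemma trace_inv_fromBlocks_zero_mul_fromBlocks {A : Matrix ι ι R} (hA : IsUnit A.det)
    (hD : IsUnit D.det) (B : Matrix ι κ R) (C : Matrix κ ι R) :
    ((Matrix.fromBlocks A 0 0 D)⁻¹ * Matrix.fromBlocks A B C D).trace = Fintype.card (ι ⊕ κ) := by
  have hinv : (Matrix.fromBlocks A 0 0 D)⁻¹ = Matrix.fromBlocks A⁻¹ 0 0 D⁻¹ :=
    Matrix.inv_eq_left_inv <| by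
      simp [Matrix.fromBlocks_multiply, Matrix.nonsing_inv_mul _ hA, Matrix.nonsing_inv_mul _ hD]
  simp [hinv, Matrix.fromBlocks_multiply, Matrix.nonsing_inv_mul _ hA,
    Matrix.nonsing_inv_mul _ hD, Matrix.trace, Fintype.sum_sum_type]

end BlockMatrix

section PosDefBlockMatrix

variable {ι κ : Type*} [Finite ι] {A N : Matrix ι ι ℝ} {B : Matrix ι κ ℝ} {C : Matrix κ ι ℝ}
  {D : Matrix κ κ ℝ}

lemma posDef_fromBlocks_add_left [Finite κ] (hS : (Matrix.fromBlocks A B C D).PosDef)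
    (hN : N.PosSemidef) : (Matrix.fromBlocks (A + N) B C D).PosDef := by
  classical
  have := Fintype.ofFinite ι
  have := Fintype.ofFinite κ
  have hN₀ : (Matrix.fromBlocks N 0 0 (0 : Matrix κ κ ℝ)).PosSemidef := by
    have h := hN.mul_mul_conjTranspose_same (Matrix.fromRows 1 0 : Matrix (ι ⊕ κ) ι ℝ)
    rw [Matrix.fromRows_mul, Matrix.conjTranspose_fromRows_eq_fromCols_conjTranspose,
      Matrix.fromRows_mul_fromCols] at h
    simpa using h
  simpa [Matrix.fromBlocks_add] using hS.add_posSemidef hN₀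

lemma posDef_fromBlocks_of_posDef_schur [Fintype κ] [DecidableEq κ] (hD : D.PosDef)
    (h : (A - B * D⁻¹ * Bᴴ).PosDef) : (Matrix.fromBlocks A B Bᴴ D).PosDef := by
  classical
  have := Fintype.ofFinite ι
  have := hD.isUnit.invertible
  refine ((Matrix.PosDef.fromBlocks₂₂ A B hD).2 h.posSemidef).posDef_iff_isUnit.2 ?_
  rw [Matrix.isUnit_fromBlocks_iff_of_invertible₂₂, Matrix.invOf_eq_nonsing_inv]
  exact h.isUnit

lemma posDef_fromBlocks_zero [Finite κ] (hA : A.PosDef) (hD : D.PosDef) :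
    (Matrix.fromBlocks A 0 0 D).PosDef := by
  classical
  have := Fintype.ofFinite κ
  simpa using posDef_fromBlocks_of_posDef_schur (B := 0) hD (by simpa using hA)

lemma posSemidef_schur_of_posDef_fromBlocks [Fintype κ] [DecidableEq κ]
    (h : (Matrix.fromBlocks A B C D).PosDef) : (A - B * D⁻¹ * C).PosSemidef := by
  have := Fintype.ofFinite ι
  obtain ⟨-, rfl, -, -⟩ := Matrix.isHermitian_fromBlocks_iff.1 h.isHermitian
  have hD : D.PosDef := h.submatrix Sum.inr_injective
  have := hD.isUnit.invertible
  exact (Matrix.PosDef.fromBlocks₂₂ A B hD).1 h.posSemidef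

lemma posDef_fromBlocks_add_self (hA : A.PosDef) (hN : N.PosDef) :
    (Matrix.fromBlocks (A + N) A A A).PosDef := by
  classical
  have := Fintype.ofFinite ι
  have hschur : A + N - A * A⁻¹ * Aᴴ = N := by
    rw [Matrix.mul_nonsing_inv _ hA.det_pos.ne'.isUnit, one_mul, hA.isHermitian.eq,
      add_sub_cancel_left]
  have h := posDef_fromBlocks_of_posDef_schur hA (hschur.symm ▸ hN)
  rwa [hA.isHermitian.eq] at h

end PosDefBlockMatrix

section GaussianPair

variable {ι κ : Type*} [Fintype ι] [DecidableEq ι] [Fintype κ] [DecidableEq κ]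

/-- Law of a pair of jointly Gaussian vectors with means `a`, `b`, covariances `A`, `D` and
cross-covariances `B`, `C`. -/
def gaussPairMeasure (a : ι → ℝ) (b : κ → ℝ) (A : Matrix ι ι ℝ) (B : Matrix ι κ ℝ)
    (C : Matrix κ ι ℝ) (D : Matrix κ κ ℝ) : Measure ((ι → ℝ) × (κ → ℝ)) :=
  (gaussMeasure (Sum.elim a b) (Matrix.fromBlocks A B C D)).map
    (MeasurableEquiv.sumPiEquivProdPi fun _ => ℝ)

variable (a : ι → ℝ) (b : κ → ℝ) {A : Matrix ι ι ℝ} {B : Matrix ι κ ℝ} {C : Matrix κ ι ℝ}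
  {D : Matrix κ κ ℝ}

lemma isProbabilityMeasure_gaussPairMeasure (hS : (Matrix.fromBlocks A B C D).PosDef) :
    IsProbabilityMeasure (gaussPairMeasure a b A B C D) := by
  have := isProbabilityMeasure_gaussMeasure (Sum.elim a b) hS
  exact Measure.isProbabilityMeasure_map (MeasurableEquiv.measurable _).aemeasurable

lemma map_fst_gaussPairMeasure (hS : (Matrix.fromBlocks A B C D).PosDef) :
    (gaussPairMeasure a b A B C D).map Prod.fst = gaussMeasure a A := by
  let P : Matrix ι (ι ⊕ κ) ℝ := Matrix.fromCols 1 0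
  have hfst (w : ι ⊕ κ → ℝ) : P *ᵥ w = fun i => w (Sum.inl i) := by
    simp [P, Matrix.fromCols_mulVec, Function.comp_def]
  have hcov : P * Matrix.fromBlocks A B C D * Pᵀ = A := by
    simp [P, Matrix.fromCols_mul_fromBlocks, Matrix.transpose_fromCols,
      Matrix.fromCols_mul_fromRows]
  have hA : (P * Matrix.fromBlocks A B C D * Pᵀ).PosDef :=
    hcov.symm ▸ hS.submatrix Sum.inl_injective
  have hmap := map_mulVec_gaussMeasure (Sum.elim a b) hS P hA
  simp only [hfst, hcov] at hmap
  rw [gaussPairMeasure, Measure.map_map (by fun_prop) (MeasurableEquiv.measurable _)]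
  exact hmap

lemma map_snd_gaussPairMeasure (hS : (Matrix.fromBlocks A B C D).PosDef) :
    (gaussPairMeasure a b A B C D).map Prod.snd = gaussMeasure b D := by
  let Q : Matrix κ (ι ⊕ κ) ℝ := Matrix.fromCols 0 1
  have hsnd (w : ι ⊕ κ → ℝ) : Q *ᵥ w = fun j => w (Sum.inr j) := by
    simp [Q, Matrix.fromCols_mulVec, Function.comp_def]
  have hcov : Q * Matrix.fromBlocks A B C D * Qᵀ = D := by
    simp [Q, Matrix.fromCols_mul_fromBlocks, Matrix.transpose_fromCols,
      Matrix.fromCols_mul_fromRows]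
  have hD : (Q * Matrix.fromBlocks A B C D * Qᵀ).PosDef :=
    hcov.symm ▸ hS.submatrix Sum.inr_injective
  have hmap := map_mulVec_gaussMeasure (Sum.elim a b) hS Q hD
  simp only [hsnd, hcov] at hmap
  rw [gaussPairMeasure, Measure.map_map (by fun_prop) (MeasurableEquiv.measurable _)]
  exact hmap

lemma map_mulVec_add_mulVec_prodMk_gaussMeasure {σ τ : Type*} [Fintype σ] [DecidableEq σ]
    [Fintype τ] [DecidableEq τ] (m : σ → ℝ) {S : Matrix σ σ ℝ} (hS : S.PosDef) (m' : τ → ℝ)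
    {T : Matrix τ τ ℝ} (hT : T.PosDef) (P₁ : Matrix ι σ ℝ) (Q₁ : Matrix ι τ ℝ)
    (P₂ : Matrix κ σ ℝ) (Q₂ : Matrix κ τ ℝ)
    (h : (Matrix.fromBlocks (P₁ * S * P₁ᵀ + Q₁ * T * Q₁ᵀ) (P₁ * S * P₂ᵀ + Q₁ * T * Q₂ᵀ)
      (P₂ * S * P₁ᵀ + Q₂ * T * Q₁ᵀ) (P₂ * S * P₂ᵀ + Q₂ * T * Q₂ᵀ)).PosDef) :
    ((gaussMeasure m S).prod (gaussMeasure m' T)).map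
        (fun w => (P₁ *ᵥ w.1 + Q₁ *ᵥ w.2, P₂ *ᵥ w.1 + Q₂ *ᵥ w.2)) =
      gaussPairMeasure (P₁ *ᵥ m + Q₁ *ᵥ m') (P₂ *ᵥ m + Q₂ *ᵥ m')
        (P₁ * S * P₁ᵀ + Q₁ * T * Q₁ᵀ) (P₁ * S * P₂ᵀ + Q₁ * T * Q₂ᵀ)
        (P₂ * S * P₁ᵀ + Q₂ * T * Q₁ᵀ) (P₂ * S * P₂ᵀ + Q₂ * T * Q₂ᵀ) := by
  let P := Matrix.fromRows P₁ P₂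
  let Q := Matrix.fromRows Q₁ Q₂
  have hcov : P * S * Pᵀ + Q * T * Qᵀ = Matrix.fromBlocks (P₁ * S * P₁ᵀ + Q₁ * T * Q₁ᵀ)
      (P₁ * S * P₂ᵀ + Q₁ * T * Q₂ᵀ) (P₂ * S * P₁ᵀ + Q₂ * T * Q₁ᵀ)
      (P₂ * S * P₂ᵀ + Q₂ * T * Q₂ᵀ) := by
    rw [Matrix.fromRows_mul P₁, Matrix.fromRows_mul Q₁, Matrix.transpose_fromRows,
      Matrix.transpose_fromRows, Matrix.fromRows_mul_fromCols, Matrix.fromRows_mul_fromCols,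
      Matrix.fromBlocks_add]
  have hsum (x : σ → ℝ) (z : τ → ℝ) :
      P *ᵥ x + Q *ᵥ z = Sum.elim (P₁ *ᵥ x + Q₁ *ᵥ z) (P₂ *ᵥ x + Q₂ *ᵥ z) := by
    simp only [P, Q, Matrix.fromRows_mulVec, Sum.elim_add_add]
  have hmap := map_mulVec_add_mulVec_gaussMeasure m hS m' hT P Q (hcov ▸ h)
  rw [gaussPairMeasure, ← hcov, ← hsum, ← hmap,
    Measure.map_map (MeasurableEquiv.measurable _) (by fun_prop)]
  refine congrArg (Measure.map · _) (funext fun w => ?_)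
  rw [Function.comp_apply, hsum]
  rfl

lemma gaussMeasure_prod_gaussMeasure (hA : A.PosDef) (hD : D.PosDef) :
    (gaussMeasure a A).prod (gaussMeasure b D) = gaussPairMeasure a b A 0 0 D := by
  simpa using map_mulVec_add_mulVec_prodMk_gaussMeasure a hA b hD
    (1 : Matrix ι ι ℝ) 0 0 (1 : Matrix κ κ ℝ)
    (by simpa using posDef_fromBlocks_zero hA hD)

lemma map_add_fst_gaussMeasure_prod (c : ι → ℝ) {N : Matrix ι ι ℝ} (hA : A.PosDef)
    (hN : N.PosDef) :
    ((gaussMeasure a A).prod (gaussMeasure c N)).map (fun w => (w.1 + w.2, w.1)) =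
      gaussPairMeasure (a + c) a (A + N) A A A := by
  simpa using map_mulVec_add_mulVec_prodMk_gaussMeasure a hA c hN
    (1 : Matrix ι ι ℝ) (1 : Matrix ι ι ℝ) (1 : Matrix ι ι ℝ) 0
    (by simpa using posDef_fromBlocks_add_self hA hN)

lemma map_add_snd_gaussPairMeasure_prod (c : ι → ℝ) {N : Matrix ι ι ℝ}
    (hS : (Matrix.fromBlocks A B C D).PosDef) (hN : N.PosDef) :
    ((gaussPairMeasure a b A B C D).prod (gaussMeasure c N)).map (fun w => (w.1.1 + w.2, w.1.2)) =
      gaussPairMeasure (a + c) b (A + N) B C D := by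
  have := isProbabilityMeasure_gaussMeasure (Sum.elim a b) hS
  have := isProbabilityMeasure_gaussMeasure c hN
  have hpos := posDef_fromBlocks_add_left hS hN.posSemidef
  have hmap := map_mulVec_add_mulVec_prodMk_gaussMeasure (Sum.elim a b) hS c hN
    (Matrix.fromCols 1 0 : Matrix ι (ι ⊕ κ) ℝ) (1 : Matrix ι ι ℝ)
    (Matrix.fromCols 0 1 : Matrix κ (ι ⊕ κ) ℝ) 0
  simp only [Matrix.fromCols_mul_fromBlocks, Matrix.transpose_fromCols,
    Matrix.fromCols_mul_fromRows, Matrix.fromCols_mulVec, Matrix.transpose_one,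
    Matrix.transpose_zero, one_mul, mul_one, add_zero, zero_add,
    Matrix.one_mulVec, Matrix.zero_mulVec, Matrix.zero_mul, Matrix.mul_zero, Matrix.one_mul,
    Matrix.mul_one, Sum.elim_comp_inl, Sum.elim_comp_inr] at hmap
  rw [← hmap hpos, gaussPairMeasure]
  conv_lhs => rw [← Measure.map_id (μ := gaussMeasure c N)]
  rw [Measure.map_prod_map _ _ (MeasurableEquiv.measurable _) measurable_id,
    Measure.map_map (by fun_prop) ((MeasurableEquiv.measurable _).prodMap measurable_id)]
  rfl

end GaussianPair

section MutualInformation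

/-- Mutual information `D(P ‖ P₁ ⊗ P₂)` of the two components of a random pair with joint law `P`
and marginals `P₁`, `P₂`. -/
def mutualInfo {α β : Type*} [MeasurableSpace α] [MeasurableSpace β] (P : Measure (α × β)) : ℝ :=
  KLdiv P ((P.map Prod.fst).prod (P.map Prod.snd))

lemma mutualInfo_map_prodMk {Ω α β : Type*} [MeasurableSpace Ω] [MeasurableSpace α]
    [MeasurableSpace β] (μ : Measure Ω) {f : Ω → α} {g : Ω → β} (hf : Measurable f)
    (hg : Measurable g) :
    mutualInfo (μ.map fun ω => (f ω, g ω)) =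
      KLdiv (μ.map fun ω => (f ω, g ω)) ((μ.map f).prod (μ.map g)) := by
  rw [mutualInfo, Measure.map_map measurable_fst (hf.prodMk hg),
    Measure.map_map measurable_snd (hf.prodMk hg)]
  rfl

variable {ι κ : Type*} [Fintype ι] [DecidableEq ι] [Fintype κ] [DecidableEq κ]
  {A : Matrix ι ι ℝ} {B : Matrix ι κ ℝ} {C : Matrix κ ι ℝ} {D : Matrix κ κ ℝ}

lemma mutualInfo_gaussPairMeasure (a : ι → ℝ) (b : κ → ℝ)
    (hS : (Matrix.fromBlocks A B C D).PosDef) :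
    mutualInfo (gaussPairMeasure a b A B C D) =
      1 / 2 * (Real.log A.det - Real.log (A - B * D⁻¹ * C).det) := by
  have hA : A.PosDef := hS.submatrix Sum.inl_injective
  have hD : D.PosDef := hS.submatrix Sum.inr_injective
  have hAD := posDef_fromBlocks_zero hA hD
  have := isProbabilityMeasure_gaussMeasure (Sum.elim a b) hS
  have := isProbabilityMeasure_gaussMeasure (Sum.elim a b) hAD
  have hdet := det_fromBlocks_eq_det_mul_det_schur A B C hD.isUnit
  have hschur : (A - B * D⁻¹ * C).det ≠ 0 := right_ne_zero_of_mul (hdet ▸ hS.det_pos.ne')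
  rw [mutualInfo, map_fst_gaussPairMeasure a b hS, map_snd_gaussPairMeasure a b hS,
    gaussMeasure_prod_gaussMeasure a b hA hD, gaussPairMeasure, gaussPairMeasure,
    KLdiv_map_measurableEquiv (gaussMeasure_absolutelyContinuous _ _ _ hAD),
    KLdiv_gaussMeasure _ _ hS hAD, sub_self, zero_dotProduct,
    trace_inv_fromBlocks_zero_mul_fromBlocks hA.det_pos.ne'.isUnit hD.det_pos.ne'.isUnit,
    hdet, Matrix.det_fromBlocks_zero₂₁, Real.log_mul hA.det_pos.ne' hD.det_pos.ne',
    Real.log_mul hD.det_pos.ne' hschur]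
  ring

lemma mutualInfo_map_add_fst_gaussMeasure_prod (a c : ι → ℝ) {N : Matrix ι ι ℝ} (hA : A.PosDef)
    (hN : N.PosDef) :
    mutualInfo (((gaussMeasure a A).prod (gaussMeasure c N)).map fun w => (w.1 + w.2, w.1)) =
      1 / 2 * (Real.log (A + N).det - Real.log N.det) := by
  rw [map_add_fst_gaussMeasure_prod a c hA hN,
    mutualInfo_gaussPairMeasure _ _ (posDef_fromBlocks_add_self hA hN),
    Matrix.mul_nonsing_inv _ hA.det_pos.ne'.isUnit, one_mul, add_sub_cancel_left]

lemma mutualInfo_map_add_snd_gaussPairMeasure_prod (a : ι → ℝ) (b : κ → ℝ) (c : ι → ℝ)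
    {N : Matrix ι ι ℝ}
    (hS : (Matrix.fromBlocks A B C D).PosDef) (hN : N.PosDef) :
    mutualInfo (((gaussPairMeasure a b A B C D).prod (gaussMeasure c N)).map
        fun w => (w.1.1 + w.2, w.1.2)) =
      1 / 2 * (Real.log (A + N).det - Real.log (A - B * D⁻¹ * C + N).det) := by
  rw [map_add_snd_gaussPairMeasure_prod a b c hS hN,
    mutualInfo_gaussPairMeasure _ _ (posDef_fromBlocks_add_left hS hN.posSemidef),
    sub_add_eq_add_sub]

lemma mutualInfo_sub_mutualInfo_gaussPairMeasure_prod (a : ι → ℝ) (b : κ → ℝ) (c : ι → ℝ)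
    {N : Matrix ι ι ℝ} (hS : (Matrix.fromBlocks A B C D).PosDef) (hN : N.PosDef) :
    let law := (gaussPairMeasure a b A B C D).prod (gaussMeasure c N)
    mutualInfo (law.map fun w => (w.1.1 + w.2, w.1.1)) -
        mutualInfo (law.map fun w => (w.1.1 + w.2, w.1.2)) =
      1 / 2 * (Real.log (A - B * D⁻¹ * C + N).det - Real.log N.det) := by
  intro law
  have hA : A.PosDef := hS.submatrix Sum.inl_injective
  have := isProbabilityMeasure_gaussPairMeasure a b hS
  have := isProbabilityMeasure_gaussMeasure c hN
  have hfst : law.map (fun w => (w.1.1 + w.2, w.1.1)) =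
      ((gaussMeasure a A).prod (gaussMeasure c N)).map fun w => (w.1 + w.2, w.1) := by
    conv_rhs => rw [← map_fst_gaussPairMeasure a b hS, ← Measure.map_id (μ := gaussMeasure c N)]
    rw [Measure.map_prod_map _ _ measurable_fst measurable_id,
      Measure.map_map (by fun_prop) (by fun_prop)]
    rfl
  rw [hfst, mutualInfo_map_add_fst_gaussMeasure_prod a c hA hN,
    mutualInfo_map_add_snd_gaussPairMeasure_prod a b c hS hN]
  ring

end MutualInformation

section Eigenvalues

variable {ι 𝕜 : Type*} [Fintype ι] [DecidableEq ι] [RCLike 𝕜] {M : Matrix ι ι 𝕜}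

lemma det_add_smul_one (hM : M.IsHermitian) (c : 𝕜) :
    (M + c • (1 : Matrix ι ι 𝕜)).det = ∏ i, ((hM.eigenvalues i : 𝕜) + c) := by
  have hscalar : Matrix.scalar ι (-c) - M = -(M + c • (1 : Matrix ι ι 𝕜)) := by
    rw [Matrix.scalar_apply, ← Matrix.smul_one_eq_diagonal, neg_smul]
    abel
  have hprod : ∏ i, (-c - (hM.eigenvalues i : 𝕜)) =
      (-1) ^ Fintype.card ι * ∏ i, ((hM.eigenvalues i : 𝕜) + c) := by
    rw [← Finset.card_univ, ← Finset.prod_const, ← Finset.prod_mul_distrib]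
    exact Finset.prod_congr rfl fun i _ => by ring
  have hchar := Matrix.eval_charpoly M (-c)
  rw [hM.charpoly_eq, Polynomial.eval_prod, hscalar, Matrix.det_neg] at hchar
  simp only [Polynomial.eval_sub, Polynomial.eval_X, Polynomial.eval_C, hprod] at hchar
  exact (mul_left_cancel₀ (pow_ne_zero _ (by norm_num)) hchar).symm

lemma log_det_add_smul_one_sub_log_det {M : Matrix ι ι ℝ} (hM : M.PosSemidef) {κ : ℝ}
    (hκ : 0 < κ) :
    Real.log (M + κ • (1 : Matrix ι ι ℝ)).det - Real.log (κ • (1 : Matrix ι ι ℝ)).det =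
      ∑ i, Real.log ((hM.isHermitian.eigenvalues i + κ) / κ) := by
  have hpos (i : ι) : 0 < hM.isHermitian.eigenvalues i + κ :=
    add_pos_of_nonneg_of_pos (hM.eigenvalues_nonneg i) hκ
  simp_rw [fun i => Real.log_div (hpos i).ne' hκ.ne', Finset.sum_sub_distrib]
  have hdet : (M + κ • (1 : Matrix ι ι ℝ)).det = ∏ i, (hM.isHermitian.eigenvalues i + κ) :=
    det_add_smul_one hM.isHermitian κ
  rw [hdet, Real.log_prod fun i _ => (hpos i).ne', Matrix.det_smul,
    Matrix.det_one, mul_one, Real.log_pow, Finset.sum_const, Finset.card_univ, nsmul_eq_mul]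

end Eigenvalues

/-- **Gaussian mutual-information difference.** If `(X,Y)` is jointly Gaussian with
positive-definite joint covariance `K = [[K_X, K_XY],[K_YX, K_Y]]`, `Z ~ N(0, κ I_n)` is
independent of `(X,Y)`, and `U = X + Z`, then
`I(U;X) − I(U;Y) = ½ ∑ᵢ log((λᵢ^{(X|Y)} + κ)/κ)`,
where the `λᵢ^{(X|Y)}` are the eigenvalues of `K_{X|Y} = K_X − K_XY K_Y⁻¹ K_YX` and
`I(A;B) = D(P_{AB} ‖ P_A ⊗ P_B)`. -/
theorem gaussian_mutual_information_difference
    {n : ℕ} (hn : 1 ≤ n) (κ : ℝ) (hκ : 0 < κ)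
    (mX mY : Fin n → ℝ) (KX KXY KYX KY : Matrix (Fin n) (Fin n) ℝ)
    (hK : (Matrix.fromBlocks KX KXY KYX KY).PosDef)
    (hcond : (KX - KXY * KY⁻¹ * KYX).IsHermitian)
    -- the joint law of (X, Y)
    (lawXY : Measure ((Fin n → ℝ) × (Fin n → ℝ)))
    (hlawXY : lawXY =
      (gaussMeasure (Sum.elim mX mY) (Matrix.fromBlocks KX KXY KYX KY)).map
        (fun w => (fun i => w (Sum.inl i), fun i => w (Sum.inr i))))
    -- the joint law of ((X, Y), Z), with Z ~ N(0, κ I_n) independent of (X, Y)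
    (lawXYZ : Measure (((Fin n → ℝ) × (Fin n → ℝ)) × (Fin n → ℝ)))
    (hlawXYZ : lawXYZ =
      lawXY.prod (gaussMeasure (0 : Fin n → ℝ) (κ • (1 : Matrix (Fin n) (Fin n) ℝ)))) :
    -- I(U;X) - I(U;Y) with U = X + Z
    KLdiv (lawXYZ.map fun w => (w.1.1 + w.2, w.1.1))
        ((lawXYZ.map fun w => w.1.1 + w.2).prod (lawXY.map Prod.fst)) -
      KLdiv (lawXYZ.map fun w => (w.1.1 + w.2, w.1.2))
        ((lawXYZ.map fun w => w.1.1 + w.2).prod (lawXY.map Prod.snd)) =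
      (1 / 2) * ∑ i, Real.log ((hcond.eigenvalues i + κ) / κ) := by
  have hN : (κ • (1 : Matrix (Fin n) (Fin n) ℝ)).PosDef := Matrix.PosDef.one.smul hκ
  have := isProbabilityMeasure_gaussMeasure (0 : Fin n → ℝ) hN
  have hlaw : lawXY = gaussPairMeasure mX mY KX KXY KYX KY := hlawXY
  have hXY : lawXY = lawXYZ.map Prod.fst := by
    rw [hlawXYZ, hlaw]
    have := isProbabilityMeasure_gaussPairMeasure mX mY hK
    exact Measure.fst_prod.symm
  have hX : lawXY.map Prod.fst = lawXYZ.map fun w => w.1.1 := by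
    rw [hXY, Measure.map_map measurable_fst measurable_fst]
    rfl
  have hY : lawXY.map Prod.snd = lawXYZ.map fun w => w.1.2 := by
    rw [hXY, Measure.map_map measurable_snd measurable_fst]
    rfl
  rw [hX, hY, ← mutualInfo_map_prodMk _ (by fun_prop) (by fun_prop),
    ← mutualInfo_map_prodMk _ (by fun_prop) (by fun_prop), hlawXYZ, hlaw,
    mutualInfo_sub_mutualInfo_gaussPairMeasure_prod mX mY 0 hK hN,
    log_det_add_smul_one_sub_log_det (posSemidef_schur_of_posDef_fromBlocks hK) hκ]

end
end

section
/- Let 𝒳 and 𝒰 be finite alphabets and let (X_i, U_i)_{i∈ℕ} be a jointly stationary and ergodic process on 𝒳 × 𝒰 (i.e., its law on ((𝒳×𝒰)^ℕ) is shift-invariant and ergodic). Let P_{U^n}, P_{X^n}, P_{U^n|X^n} denote the finite-dimensional distributions. Then the normalized information density Z_n = (1/n) log(P_{U^n|X^n}(U^n|X^n)/P_{U^n}(U^n)) converges in probability to the mutual information rate lim_{n→∞} (1/n) I(X^n; U^n), which exists; consequently the spectral sup- and inf-mutual information rates coincide: Ī(X;U) = I̲(X;U) = lim_{n→∞} (1/n)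 I(X^n; U^n). -/
open Filter MeasureTheory

noncomputable section

/-- Probability of an event under a pmf. -/
def prEv {Ω : Type*} [Fintype Ω] (μ : Ω → ℝ) (S : Set Ω) : ℝ :=
  ∑ ω, S.indicator μ ω

/-- `p-limsup` of a sequence of real random variables `Z n` on finite sample spaces
with laws `μ n`. -/
def pLimsupF {Ω : ℕ → Type*} [∀ n, Fintype (Ω n)]
    (μ : ∀ n, Ω n → ℝ) (Z : ∀ n, Ω n → ℝ) : ℝ :=
  sInf {α : ℝ | Tendsto (fun n => prEv (μ n) {ω | α < Z n ω}) atTop (nhds 0)}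

/-- `p-liminf` of a sequence of real random variables `Z n` on finite sample spaces
with laws `μ n`. -/
def pLiminfF {Ω : ℕ → Type*} [∀ n, Fintype (Ω n)]
    (μ : ∀ n, Ω n → ℝ) (Z : ∀ n, Ω n → ℝ) : ℝ :=
  sSup {α : ℝ | Tendsto (fun n => prEv (μ n) {ω | Z n ω < α}) atTop (nhds 0)}

/-- The shift map on one-sided sequences. -/
def shift {α : Type*} : (ℕ → α) → ℕ → α := fun ω i => ω (i + 1)

/-!
The information density of `(X^n, U^n)` is `-log P_{X^n} - log P_{U^n} + log P_{(X,U)^n}`, so it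
suffices that `n⁻¹ • (-log P_{A^n}(A^n))` converges in `L¹` to a constant for every finite-valued
stationary ergodic process `A`. Put `x n := -log P_{A^n}(A^n)` and let `K` be composition with the
measure-preserving map. By stationarity `x (n + 1) - K (x n)` is the conditional surprisal of one
letter given the `n` letters that follow it. Conditioning on more letters lowers the conditional
entropy, and the drop in entropy is a relative entropy which, by a Pinsker-type bound, controls
the `L¹` distance of the conditional surprisals; hence these form a Cauchy sequence, with limit `G`.
As `K` is a contraction, `n⁻¹ • x n` has the same limit as the averages `n⁻¹ • ∑ i < n, K^i G`, and
that limit is the constant `∫ G` by von Neumann's mean ergodic theorem, extended from `L²` to `L¹`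
by density.
-/

open scoped Topology ENNReal

section ErgodicTheorems

lemma tendsto_inv_smul_of_tendsto_sub_apply {E : Type*} [NormedAddCommGroup E] [NormedSpace ℝ E]
    {K : E →+ E} (hK : LipschitzWith 1 K) {x : ℕ → E} {G P : E}
    (hx : Tendsto (fun n => x (n + 1) - K (x n)) atTop (𝓝 G))
    (hG : Tendsto (birkhoffAverage ℝ K id · G) atTop (𝓝 P)) :
    Tendsto (fun n : ℕ => (n : ℝ)⁻¹ • x n) atTop (𝓝 P) := by
  set y : ℕ → E := fun n => x n - birkhoffSum K id n G
  set e : ℕ → ℝ := fun n => ‖x (n + 1) - K (x n) - G‖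
  -- The discrepancy `y` solves the recursion with a driving term tending to `0`, hence is `o(n)`.
  have y_succ (n : ℕ) : y (n + 1) = K (y n) + (x (n + 1) - K (x n) - G) := by
    have hKsum : birkhoffSum K id n (K G) = K (birkhoffSum K id n G) := by
      simp only [birkhoffSum, id, map_sum, ← Function.iterate_succ_apply,
        Function.iterate_succ_apply']
    simp only [y, birkhoffSum_succ', hKsum, map_sub, id]
    abel
  have norm_y_le (n : ℕ) : ‖y n‖ ≤ ‖x 0‖ + ∑ j ∈ Finset.range n, e j := by
    induction n with
    | zero => simp [y]
    | succ n ih =>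
      rw [y_succ, Finset.sum_range_succ, ← add_assoc]
      have hKy : ‖K (y n)‖ ≤ ‖y n‖ := by simpa using hK.dist_le_mul (y n) 0
      exact (norm_add_le _ _).trans (by gcongr; exact hKy.trans ih)
  have hbound : Tendsto (fun n : ℕ => (n : ℝ)⁻¹ * ‖x 0‖ + (n : ℝ)⁻¹ * ∑ j ∈ Finset.range n, e j)
      atTop (𝓝 0) := by
    have he : Tendsto e atTop (𝓝 0) := tendsto_iff_norm_sub_tendsto_zero.mp hx
    simpa using (tendsto_inv_atTop_nhds_zero_nat.mul_const ‖x 0‖).add he.cesaro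
  have hy : Tendsto (fun n : ℕ => (n : ℝ)⁻¹ • y n) atTop (𝓝 0) := by
    refine squeeze_zero_norm (fun n => ?_) hbound
    rw [norm_smul, Real.norm_of_nonneg (by positivity), ← mul_add]
    gcongr
    exact norm_y_le n
  simpa [y, birkhoffAverage, ← smul_add] using hy.add hG

lemma map_birkhoffAverage_of_semiconj {E F : Type*} [AddCommGroup E] [AddCommGroup F] [Module ℝ E]
    [Module ℝ F] {J : E →+ F} {f : E → E} {g : F → F} (hJ : Function.Semiconj J f g) (n : ℕ)
    (x : E) : J (birkhoffAverage ℝ f id n x) = birkhoffAverage ℝ g id n (J x) := by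
  rw [map_birkhoffAverage ℝ ℝ]
  simp only [birkhoffAverage, birkhoffSum, Function.comp_apply, id, (hJ.iterate_right _ _)]

variable {Ω : Type*} [MeasurableSpace Ω] {μ : Measure Ω} {T : Ω → Ω}

lemma Lp_eq_const_of_compMeasurePreserving_eq [IsFiniteMeasure μ] {p : ℝ≥0∞} (hT : Ergodic T μ)
    {g : Lp ℝ p μ} (hg : Lp.compMeasurePreserving T hT.toMeasurePreserving g = g) :
    ∃ c : ℝ, g = Lp.const p μ c := by
  have hinv : g ∘ T =ᵐ[μ] g := by
    simpa only [hg] using (Lp.coeFn_compMeasurePreserving g hT.toMeasurePreserving).symm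
  obtain ⟨c, hc⟩ := hT.ae_eq_const_of_ae_eq_comp_ae (Lp.aestronglyMeasurable g) hinv
  exact ⟨c, Lp.ext (hc.trans (Lp.coeFn_const p μ c).symm)⟩

/-- The inclusion of `L^q` into `L^p` over a finite measure, for `p ≤ q`. -/
def lpInclusion (μ : Measure Ω) [IsFiniteMeasure μ] {p q : ℝ≥0∞} (hpq : p ≤ q) :
    Lp ℝ q μ →+ Lp ℝ p μ :=
  AddSubgroup.inclusion (Lp.antitone hpq)

lemma continuous_lpInclusion [IsProbabilityMeasure μ] {p q : ℝ≥0∞} [Fact (1 ≤ p)] [Fact (1 ≤ q)]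
    (hpq : p ≤ q) : Continuous (lpInclusion μ hpq) := by
  refine AddMonoidHomClass.continuous_of_bound (lpInclusion μ hpq) 1 fun f => ?_
  rw [one_mul]
  exact ENNReal.toReal_mono (Lp.eLpNorm_ne_top f)
    (eLpNorm_le_eLpNorm_of_exponent_le hpq (Lp.aestronglyMeasurable f))

lemma denseRange_lpInclusion [IsFiniteMeasure μ] {p q : ℝ≥0∞} [Fact (1 ≤ p)] (hpq : p ≤ q)
    (hp : p ≠ ∞) : DenseRange (lpInclusion μ hpq) := by
  refine (Lp.simpleFunc.dense hp).mono fun f hf => ?_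
  let s := Lp.simpleFunc.toSimpleFunc (⟨f, hf⟩ : Lp.simpleFunc ℝ p μ)
  refine ⟨(s.memLp_of_isFiniteMeasure q μ).toLp s, ?_⟩
  exact congrArg Subtype.val (Lp.simpleFunc.toLp_toSimpleFunc ⟨f, hf⟩)

lemma integral_compMeasurePreserving {p : ℝ≥0∞} (hT : MeasurePreserving T μ μ) (g : Lp ℝ p μ) :
    ∫ ω, Lp.compMeasurePreserving T hT g ω ∂μ = ∫ ω, g ω ∂μ := by
  have hg : AEStronglyMeasurable g (μ.map T) := by
    simpa only [hT.map_eq] using Lp.aestronglyMeasurable g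
  calc ∫ ω, Lp.compMeasurePreserving T hT g ω ∂μ = ∫ ω, g (T ω) ∂μ :=
        integral_congr_ae (Lp.coeFn_compMeasurePreserving g hT)
    _ = ∫ ω, g ω ∂(μ.map T) := (integral_map hT.aemeasurable hg).symm
    _ = ∫ ω, g ω ∂μ := by rw [hT.map_eq]

lemma integral_birkhoffAverage (hT : MeasurePreserving T μ μ) (G : Lp ℝ 1 μ) {n : ℕ}
    (hn : n ≠ 0) :
    ∫ ω, birkhoffAverage ℝ (Lp.compMeasurePreserving T hT) id n G ω ∂μ = ∫ ω, G ω ∂μ := by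
  have hI (f : Lp ℝ 1 μ) : L1.integralCLM f = ∫ ω, f ω ∂μ := by
    rw [← L1.integral_eq, L1.integral_eq_integral]
  have hinv : (L1.integralCLM : Lp ℝ 1 μ → ℝ) ∘ Lp.compMeasurePreserving T hT =
      L1.integralCLM := by
    ext f
    simp only [Function.comp_apply, hI, integral_compMeasurePreserving]
  rw [← hI, ← hI, map_birkhoffAverage ℝ ℝ, Function.comp_id,
    birkhoffAverage_of_comp_eq ℝ hinv (Nat.cast_ne_zero.mpr hn)]

lemma exists_tendsto_birkhoffAverage_L2 [IsFiniteMeasure μ] (hT : Ergodic T μ) (g : Lp ℝ 2 μ) :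
    ∃ c : ℝ, Tendsto
      (birkhoffAverage ℝ (Lp.compMeasurePreserving T hT.toMeasurePreserving) id · g) atTop
      (𝓝 (Lp.const 2 μ c)) := by
  let K : Lp ℝ 2 μ →L[ℝ] Lp ℝ 2 μ :=
    (Lp.compMeasurePreservingₗᵢ ℝ T hT.toMeasurePreserving).toContinuousLinearMap
  let g₀ := (K.eqLocus (1 : Lp ℝ 2 μ →L[ℝ] Lp ℝ 2 μ)).orthogonalProjectionOnto g
  obtain ⟨c, hc⟩ := Lp_eq_const_of_compMeasurePreserving_eq hT (g := g₀.1) g₀.2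
  exact ⟨c, hc ▸ K.tendsto_birkhoffAverage_orthogonalProjection
    (LinearIsometry.norm_toContinuousLinearMap_le _) g⟩

variable [IsProbabilityMeasure μ]

lemma eq_integral_of_tendsto_birkhoffAverage (hT : MeasurePreserving T μ μ) {G : Lp ℝ 1 μ} {c : ℝ}
    (hc : Tendsto (birkhoffAverage ℝ (Lp.compMeasurePreserving T hT) id · G) atTop
      (𝓝 (Lp.const 1 μ c))) : c = ∫ ω, G ω ∂μ := by
  have hconst : ∫ ω, Lp.const 1 μ c ω ∂μ = c := by
    rw [integral_congr_ae (Lp.coeFn_const 1 μ c)]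
    simp
  have hlim := (continuous_integral.tendsto _).comp hc
  rw [hconst] at hlim
  refine tendsto_nhds_unique hlim (tendsto_const_nhds.congr' ?_)
  filter_upwards [eventually_ne_atTop 0] with n hn using (integral_birkhoffAverage hT G hn).symm

theorem tendsto_birkhoffAverage_L1 (hT : Ergodic T μ) (G : Lp ℝ 1 μ) :
    Tendsto (birkhoffAverage ℝ (Lp.compMeasurePreserving T hT.toMeasurePreserving) id · G) atTop
      (𝓝 (Lp.const 1 μ (∫ ω, G ω ∂μ))) := by
  have hiso : Isometry (Lp.compMeasurePreserving (E := ℝ) (p := 1) T hT.toMeasurePreserving) :=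
    Lp.isometry_compMeasurePreserving hT.toMeasurePreserving
  have hclosed := isClosed_setOfPred_tendsto_birkhoffAverage ℝ hiso.lipschitz
    uniformContinuous_id ((Lp.constL 1 μ ℝ).continuous.comp continuous_integral)
  refine (denseRange_lpInclusion one_le_two ENNReal.one_ne_top).induction_on G hclosed fun g => ?_
  obtain ⟨c, hc⟩ := exists_tendsto_birkhoffAverage_L2 hT g
  have hsemi : Function.Semiconj (lpInclusion μ one_le_two)
      (Lp.compMeasurePreserving (E := ℝ) T hT.toMeasurePreserving)
      (Lp.compMeasurePreserving T hT.toMeasurePreserving) := fun _ => rfl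
  have hlim := (((continuous_lpInclusion one_le_two).tendsto _).comp hc).congr
    (map_birkhoffAverage_of_semiconj hsemi · g)
  have hc_eq := eq_integral_of_tendsto_birkhoffAverage hT.toMeasurePreserving hlim
  exact hc_eq ▸ hlim

end ErgodicTheorems
section Surprisal

variable {Ω S V : Type*} [MeasurableSpace Ω] {μ : Measure Ω}

/-- The probability mass function of the random variable `X`. -/
def probMass (μ : Measure Ω) (X : Ω → S) (x : S) : ℝ := μ.real (X ⁻¹' {x})

/-- The surprisal `-log P_X(X)` of the random variable `X`, whose mean is the Shannon entropy. -/
def surprisal (μ : Measure Ω) (X : Ω → S) (ω : Ω) : ℝ := -Real.log (probMass μ X (X ω))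

/-- The conditional probability `P(X = x | Y = y)`, equal to `0` when `P(Y = y) = 0`. -/
def condMass (μ : Measure Ω) (X : Ω → S) (Y : Ω → V) (x : S) (y : V) : ℝ :=
  probMass μ (fun ω => (X ω, Y ω)) (x, y) / probMass μ Y y

/-- The conditional surprisal `-log P_{X|Y}(X|Y)`, whose mean is the conditional entropy. -/
def condSurprisal (μ : Measure Ω) (X : Ω → S) (Y : Ω → V) (ω : Ω) : ℝ :=
  -Real.log (condMass μ X Y (X ω) (Y ω))

lemma probMass_comp_of_injective {e : S → V} (he : e.Injective) (X : Ω → S) (x : S) :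
    probMass μ (e ∘ X) (e x) = probMass μ X x := by
  rw [probMass, probMass, Set.preimage_comp, ← Set.image_singleton, he.preimage_image]

lemma surprisal_comp_of_injective {e : S → V} (he : e.Injective) (X : Ω → S) :
    surprisal μ (e ∘ X) = surprisal μ X :=
  funext fun ω => congrArg (-Real.log ·) (probMass_comp_of_injective he X (X ω))

lemma condMass_nonneg (X : Ω → S) (Y : Ω → V) (x : S) (y : V) : 0 ≤ condMass μ X Y x y :=
  div_nonneg measureReal_nonneg measureReal_nonneg

lemma condSurprisal_nonneg [IsFiniteMeasure μ] (X : Ω → S) (Y : Ω → V) (ω : Ω) :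
    0 ≤ condSurprisal μ X Y ω := by
  refine neg_nonneg.mpr (Real.log_nonpos (condMass_nonneg _ _ _ _) ?_)
  refine div_le_one_of_le₀ (measureReal_mono fun ω' hω' => ?_) measureReal_nonneg
  exact congrArg Prod.snd hω'

lemma ae_probMass_pos [Finite S] [IsFiniteMeasure μ] (X : Ω → S) :
    ∀ᵐ ω ∂μ, 0 < probMass μ X (X ω) := by
  have hnull (x : S) : ∀ᵐ ω ∂μ, X ω = x → 0 < probMass μ X x := by
    rcases eq_or_ne (μ (X ⁻¹' {x})) 0 with hx | hx
    · filter_upwards [measure_eq_zero_iff_ae_notMem.mp hx] with ω hω hXω using absurd hXω hω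
    · exact ae_of_all _ fun ω _ => ENNReal.toReal_pos hx (measure_ne_top _ _)
  filter_upwards [ae_all_iff.mpr hnull] with ω hω using hω _ rfl

lemma ae_condMass_pos [Finite S] [Finite V] [IsFiniteMeasure μ] (X : Ω → S) (Y : Ω → V) :
    ∀ᵐ ω ∂μ, 0 < condMass μ X Y (X ω) (Y ω) := by
  filter_upwards [ae_probMass_pos fun ω => (X ω, Y ω), ae_probMass_pos Y] with ω hXY hY
    using div_pos hXY hY

lemma condSurprisal_ae_eq_sub [Finite S] [Finite V] [IsFiniteMeasure μ] (X : Ω → S)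
    (Y : Ω → V) :
    condSurprisal μ X Y =ᵐ[μ] surprisal μ (fun ω => (X ω, Y ω)) - surprisal μ Y := by
  filter_upwards [ae_probMass_pos fun ω => (X ω, Y ω), ae_probMass_pos Y] with ω hXY hY
  rw [condSurprisal, condMass, Real.log_div hXY.ne' hY.ne', Pi.sub_apply, surprisal, surprisal]
  ring

variable [MeasurableSpace S] [MeasurableSingletonClass S]

lemma surprisal_comp_measurePreserving {T : Ω → Ω} (hT : MeasurePreserving T μ μ) {X : Ω → S}
    (hX : Measurable X) : surprisal μ (X ∘ T) = surprisal μ X ∘ T := by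
  ext ω
  rw [surprisal, Function.comp_apply, Function.comp_apply, surprisal, probMass, probMass,
    Set.preimage_comp, hT.measureReal_preimage (hX (measurableSet_singleton _)).nullMeasurableSet]

section Finite

variable [Finite S]

lemma integrable_comp_of_finite [IsFiniteMeasure μ] {X : Ω → S} (hX : Measurable X) (φ : S → ℝ) :
    Integrable (fun ω => φ (X ω)) μ :=
  Integrable.of_finite.comp_measurable hX

lemma integrable_surprisal [IsFiniteMeasure μ] {X : Ω → S} (hX : Measurable X) :
    Integrable (surprisal μ X) μ :=
  integrable_comp_of_finite hX fun x => -Real.log (probMass μ X x)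

variable [Finite V] [MeasurableSpace V] [MeasurableSingletonClass V]

lemma integrable_condSurprisal [IsFiniteMeasure μ] {X : Ω → S} {Y : Ω → V} (hX : Measurable X)
    (hY : Measurable Y) : Integrable (condSurprisal μ X Y) μ :=
  integrable_comp_of_finite (hX.prodMk hY) fun z => -Real.log (condMass μ X Y z.1 z.2)

end Finite

section Fintype

variable [Fintype S]

lemma integral_comp_eq_sum_probMass [IsFiniteMeasure μ] {X : Ω → S} (hX : Measurable X)
    (φ : S → ℝ) : ∫ ω, φ (X ω) ∂μ = ∑ x, probMass μ X x * φ x := by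
  rw [← integral_map hX.aemeasurable .of_discrete, integral_fintype Integrable.of_finite]
  simp only [smul_eq_mul, probMass, map_measureReal_apply hX (measurableSet_singleton _)]

lemma probMass_mem_stdSimplex [IsProbabilityMeasure μ] {X : Ω → S} (hX : Measurable X) :
    probMass μ X ∈ stdSimplex ℝ S := by
  refine ⟨fun _ => measureReal_nonneg, ?_⟩
  simpa using (integral_comp_eq_sum_probMass (μ := μ) hX fun _ => 1).symm

lemma sum_condMass_le_one [IsFiniteMeasure μ] {X : Ω → S} (hX : Measurable X) (Y : Ω → V) (y : V) :
    ∑ x, condMass μ X Y x y ≤ 1 := by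
  have hmeas (x : S) : MeasurableSet (X ⁻¹' {x}) := hX (measurableSet_singleton x)
  have hmarginal : ∑ x, probMass μ (fun ω => (X ω, Y ω)) (x, y) = probMass μ Y y :=
    calc ∑ x, probMass μ (fun ω => (X ω, Y ω)) (x, y)
        = ∑ x, (μ.restrict (Y ⁻¹' {y})).real (X ⁻¹' {x}) := by
          refine Finset.sum_congr rfl fun x _ => ?_
          rw [measureReal_restrict_apply (hmeas x), probMass, ← Set.singleton_prod_singleton,
            Set.mk_preimage_prod]
      _ = probMass μ Y y := by
          rw [sum_measureReal_preimage_singleton _ fun x _ => hmeas x]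
          simp [probMass]
  simp only [condMass, ← Finset.sum_div, hmarginal, div_self_le_one]

end Fintype

end Surprisal

section ConditionalSurprisal

variable {Ω S V W : Type*} [MeasurableSpace Ω] {μ : Measure Ω} [IsProbabilityMeasure μ]
  [MeasurableSpace S] [MeasurableSingletonClass S]
  [Finite V] [MeasurableSpace V] [MeasurableSingletonClass V] {X : Ω → S} {Y : Ω → V} {δ : ℝ}

lemma integral_div_condMass_le_one [Fintype S] (hX : Measurable X) (hY : Measurable Y)
    {Q : S → V → ℝ} (hQ : ∀ x y, 0 ≤ Q x y) (hQsum : ∀ y, ∑ x, Q x y ≤ 1) :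
    ∫ ω, Q (X ω) (Y ω) / condMass μ X Y (X ω) (Y ω) ∂μ ≤ 1 := by
  have := Fintype.ofFinite V
  have hterm (x : S) (y : V) : probMass μ (fun ω => (X ω, Y ω)) (x, y) *
      (Q x y / condMass μ X Y x y) ≤ probMass μ Y y * Q x y := by
    have hpos : 0 ≤ probMass μ Y y * Q x y := mul_nonneg measureReal_nonneg (hQ x y)
    rcases eq_or_ne (probMass μ (fun ω => (X ω, Y ω)) (x, y)) 0 with h | h
    · rwa [h, zero_mul]
    · rw [condMass, div_div_eq_mul_div, mul_div_cancel₀ _ h, mul_comm]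
  calc ∫ ω, Q (X ω) (Y ω) / condMass μ X Y (X ω) (Y ω) ∂μ
      = ∑ z : S × V, probMass μ (fun ω => (X ω, Y ω)) z * (Q z.1 z.2 / condMass μ X Y z.1 z.2) :=
        integral_comp_eq_sum_probMass (hX.prodMk hY) fun z => Q z.1 z.2 / condMass μ X Y z.1 z.2
    _ ≤ ∑ z : S × V, probMass μ Y z.2 * Q z.1 z.2 := Finset.sum_le_sum fun z _ => hterm z.1 z.2
    _ = ∑ y, probMass μ Y y * ∑ x, Q x y := by
        simp only [Fintype.sum_prod_type_right, Finset.mul_sum]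
    _ ≤ ∑ y, probMass μ Y y :=
        Finset.sum_le_sum fun y _ => mul_le_of_le_one_right measureReal_nonneg (hQsum y)
    _ = 1 := (probMass_mem_stdSimplex hY).2

-- Apply `log x ≤ x - 1` at `x = r / t` and at `x = t`, for `t = 1 + δ` and for `t = 1 - δ`.
lemma mul_abs_log_le {r : ℝ} (hr : 0 < r) (hδ₀ : 0 < δ) (hδ₁ : δ < 1) :
    δ * |Real.log r| ≤ r - 1 - Real.log r + δ ^ 2 := by
  have hlog {t : ℝ} (ht : 0 < t) : t * Real.log r ≤ r - t + t * (t - 1) := by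
    have hdiv : Real.log r - Real.log t ≤ r / t - 1 := by
      rw [← Real.log_div hr.ne' ht.ne']
      exact Real.log_le_sub_one_of_pos (div_pos hr ht)
    calc t * Real.log r ≤ t * (r / t - 1 + (t - 1)) := by
          gcongr
          linarith [Real.log_le_sub_one_of_pos ht]
      _ = r - t + t * (t - 1) := by field_simp
  rw [← abs_of_pos hδ₀, ← abs_mul, abs_of_pos hδ₀]
  refine abs_le'.mpr ⟨?_, ?_⟩
  · linarith [hlog (t := 1 + δ) (by linarith)]
  · linarith [hlog (t := 1 - δ) (by linarith)]

lemma integral_abs_neg_log_sub_condSurprisal_le [Fintype S] (hX : Measurable X)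
    (hY : Measurable Y) {Q : S → V → ℝ} (hQ : ∀ x y, 0 ≤ Q x y) (hQsum : ∀ y, ∑ x, Q x y ≤ 1)
    (hQpos : ∀ᵐ ω ∂μ, 0 < Q (X ω) (Y ω)) (hδ₀ : 0 < δ) (hδ₁ : δ < 1) :
    ∫ ω, |-Real.log (Q (X ω) (Y ω)) - condSurprisal μ X Y ω| ∂μ ≤
      (∫ ω, -Real.log (Q (X ω) (Y ω)) ∂μ - ∫ ω, condSurprisal μ X Y ω ∂μ) / δ + δ := by
  set r : Ω → ℝ := fun ω => Q (X ω) (Y ω) / condMass μ X Y (X ω) (Y ω)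
  set d : Ω → ℝ := fun ω => -Real.log (Q (X ω) (Y ω)) - condSurprisal μ X Y ω
  have hXY : Measurable fun ω => (X ω, Y ω) := hX.prodMk hY
  have hr : Integrable r μ :=
    integrable_comp_of_finite hXY fun z => Q z.1 z.2 / condMass μ X Y z.1 z.2
  have hcode : Integrable (fun ω => -Real.log (Q (X ω) (Y ω))) μ :=
    integrable_comp_of_finite hXY fun z => -Real.log (Q z.1 z.2)
  have hcond : Integrable (condSurprisal μ X Y) μ := integrable_condSurprisal hX hY
  have hd : Integrable d μ := hcode.sub hcond
  have hpointwise : ∀ᵐ ω ∂μ, δ * |d ω| ≤ r ω + d ω + (δ ^ 2 - 1) := by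
    filter_upwards [hQpos, ae_condMass_pos X Y] with ω hq hp
    have hlogr : Real.log (r ω) = -d ω := by
      rw [Real.log_div hq.ne' hp.ne']
      simp only [d, condSurprisal]
      ring
    have hbound := mul_abs_log_le (div_pos hq hp) hδ₀ hδ₁
    rw [hlogr, abs_neg] at hbound
    linarith
  rw [← integral_sub hcode hcond, div_add' _ _ _ hδ₀.ne', le_div_iff₀' hδ₀]
  calc δ * ∫ ω, |d ω| ∂μ = ∫ ω, δ * |d ω| ∂μ := (integral_const_mul _ _).symm
    _ ≤ ∫ ω, (r ω + d ω + (δ ^ 2 - 1)) ∂μ :=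
        integral_mono_ae (hd.abs.const_mul δ) ((hr.add hd).add (integrable_const _)) hpointwise
    _ = ∫ ω, r ω ∂μ + ∫ ω, d ω ∂μ + (δ ^ 2 - 1) := by
        rw [integral_add (f := fun ω => r ω + d ω) (hr.add hd) (integrable_const _),
          integral_add hr hd, integral_const, probReal_univ, one_smul]
    _ ≤ ∫ ω, d ω ∂μ + δ * δ := by
        linarith [integral_div_condMass_le_one (μ := μ) hX hY hQ hQsum]

lemma integral_abs_condSurprisal_comp_sub_le [Finite S] [Finite W] (hX : Measurable X)
    (hY : Measurable Y) (φ : V → W) (hδ₀ : 0 < δ) (hδ₁ : δ < 1) :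
    ∫ ω, |condSurprisal μ X (φ ∘ Y) ω - condSurprisal μ X Y ω| ∂μ ≤
      (∫ ω, condSurprisal μ X (φ ∘ Y) ω ∂μ - ∫ ω, condSurprisal μ X Y ω ∂μ) / δ + δ := by
  have := Fintype.ofFinite S
  exact integral_abs_neg_log_sub_condSurprisal_le (Q := fun x y => condMass μ X (φ ∘ Y) x (φ y))
    hX hY (fun _ _ => condMass_nonneg _ _ _ _) (fun _ => sum_condMass_le_one hX _ _)
    (ae_condMass_pos X (φ ∘ Y)) hδ₀ hδ₁

end ConditionalSurprisal

lemma cauchySeq_condSurprisal {Ω S : Type*} [MeasurableSpace Ω] {μ : Measure Ω}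
    [IsProbabilityMeasure μ] [Finite S] [MeasurableSpace S] [MeasurableSingletonClass S]
    {V : ℕ → Type*} [∀ n, Finite (V n)]
    [∀ n, MeasurableSpace (V n)] [∀ n, MeasurableSingletonClass (V n)] {X : Ω → S}
    (hX : Measurable X) {Y : ∀ n, Ω → V n} (hY : ∀ n, Measurable (Y n))
    (hfiner : ∀ {k j}, k ≤ j → ∃ φ : V j → V k, Y k = φ ∘ Y j) :
    CauchySeq fun n => (integrable_condSurprisal (μ := μ) hX (hY n)).toL1 _ := by
  set h : ℕ → ℝ := fun n => ∫ ω, condSurprisal μ X (Y n) ω ∂μ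
  have hbdd : BddBelow (Set.range h) :=
    ⟨0, Set.forall_mem_range.mpr fun n => integral_nonneg (condSurprisal_nonneg X (Y n))⟩
  refine Metric.cauchySeq_iff'.mpr fun ε hε => ?_
  obtain ⟨δ, hδ₀, hδ⟩ := exists_between (lt_min hε one_pos)
  obtain ⟨hδε, hδ₁⟩ := lt_min_iff.mp hδ
  obtain ⟨N, hN⟩ := exists_lt_of_ciInf_lt
    (lt_add_of_pos_right (⨅ n, h n) (mul_pos hδ₀ (sub_pos.mpr hδε)))
  refine ⟨N, fun j hj => ?_⟩
  obtain ⟨φ, hφ⟩ := hfiner hj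
  calc dist _ _ = ∫ ω, |condSurprisal μ X (Y N) ω - condSurprisal μ X (Y j) ω| ∂μ := by
        rw [dist_comm, dist_eq_norm, ← Integrable.toL1_sub, L1.norm_of_fun_eq_integral_norm]
        rfl
    _ ≤ (h N - h j) / δ + δ := by
        simpa only [← hφ] using integral_abs_condSurprisal_comp_sub_le hX (hY j) φ hδ₀ hδ₁
    _ < ε := by
        have hdrop : h N - h j < δ * (ε - δ) := by linarith [ciInf_le hbdd j]
        linarith [(div_lt_iff₀' hδ₀).mpr hdrop]

section Itinerary

variable {Ω A : Type*} {T : Ω → Ω}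

/-- The first `n` letters `f ω, f (T ω), …, f (T^[n-1] ω)` that the observable `f` reads off the
orbit of `ω`, as a random word of length `n`. -/
def itinerary (T : Ω → Ω) (f : Ω → A) (n : ℕ) (ω : Ω) : Fin n → A := fun i => f (T^[i] ω)

lemma itinerary_succ (f : Ω → A) (n : ℕ) :
    itinerary T f (n + 1) =
      (fun z : A × (Fin n → A) => Fin.cons z.1 z.2) ∘ fun ω => (f ω, itinerary T f n (T ω)) := by
  ext ω i
  cases i using Fin.cases <;> simp [itinerary]

lemma exists_itinerary_eq_comp (f : Ω → A) {k j : ℕ} (hkj : k ≤ j) :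
    ∃ φ : (Fin j → A) → Fin k → A, itinerary T f k = φ ∘ itinerary T f j :=
  ⟨fun w i => w (Fin.castLE hkj i), rfl⟩

variable [MeasurableSpace Ω] [MeasurableSpace A]

lemma measurable_itinerary (hT : Measurable T) {f : Ω → A} (hf : Measurable f) (n : ℕ) :
    Measurable (itinerary T f n) :=
  measurable_pi_lambda _ fun i => hf.comp (hT.iterate i)

variable {μ : Measure Ω} [MeasurableSingletonClass A] [Finite A] {f : Ω → A}

lemma surprisal_itinerary_succ_ae_eq [IsFiniteMeasure μ] (hT : MeasurePreserving T μ μ)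
    (hf : Measurable f) (n : ℕ) :
    surprisal μ (itinerary T f (n + 1)) - surprisal μ (itinerary T f n) ∘ T =ᵐ[μ]
      condSurprisal μ f (itinerary T f n ∘ T) := by
  have hcons : Function.Injective fun z : A × (Fin n → A) => (Fin.cons z.1 z.2 : Fin (n + 1) → A) :=
    fun _ _ h => Prod.ext_iff.mpr (Fin.cons_injective2 h)
  rw [itinerary_succ, surprisal_comp_of_injective hcons,
    ← surprisal_comp_measurePreserving hT (measurable_itinerary hT.measurable hf n)]
  exact (condSurprisal_ae_eq_sub f (itinerary T f n ∘ T)).symm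

/-- **Shannon–McMillan theorem** (convergence in mean). -/
theorem exists_tendsto_surprisal_itinerary [IsProbabilityMeasure μ] (hT : Ergodic T μ)
    (hf : Measurable f) :
    ∃ h : ℝ, Tendsto (fun n : ℕ => (n : ℝ)⁻¹ •
      (integrable_surprisal (μ := μ) (measurable_itinerary hT.measurable hf n)).toL1 _) atTop
      (𝓝 (Lp.const 1 μ h)) := by
  have hfactor {k j : ℕ} (hkj : k ≤ j) : ∃ φ : (Fin j → A) → Fin k → A,
      itinerary T f k ∘ T = φ ∘ itinerary T f j ∘ T :=
    (exists_itinerary_eq_comp f hkj).imp fun φ hφ => congrArg (· ∘ T) hφ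
  obtain ⟨G, hG⟩ := cauchySeq_tendsto_of_complete (cauchySeq_condSurprisal (μ := μ) hf
    (fun n => (measurable_itinerary hT.measurable hf n).comp hT.measurable) hfactor)
  have hincrement (n : ℕ) : (integrable_condSurprisal hf
      ((measurable_itinerary hT.measurable hf n).comp hT.measurable)).toL1 _ =
      (integrable_surprisal (μ := μ) (measurable_itinerary hT.measurable hf (n + 1))).toL1 _ -
        Lp.compMeasurePreserving T hT.toMeasurePreserving
          ((integrable_surprisal (measurable_itinerary hT.measurable hf n)).toL1 _) := by
    rw [Integrable.toL1, Integrable.toL1, Integrable.toL1, Lp.toLp_compMeasurePreserving,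
      ← MemLp.toLp_sub]
    exact MemLp.toLp_congr _ _ (surprisal_itinerary_succ_ae_eq hT.toMeasurePreserving hf n).symm
  exact ⟨_, tendsto_inv_smul_of_tendsto_sub_apply (Lp.isometry_compMeasurePreserving
    hT.toMeasurePreserving).lipschitz (hG.congr hincrement) (tendsto_birkhoffAverage_L1 hT G)⟩

end Itinerary

section InProbability

lemma prEv_nonneg {Ω : Type*} [Fintype Ω] {P : Ω → ℝ} (hP : ∀ w, 0 ≤ P w) (S : Set Ω) :
    0 ≤ prEv P S :=
  Finset.sum_nonneg fun w _ => Set.indicator_nonneg (fun w _ => hP w) w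

lemma prEv_mono {Ω : Type*} [Fintype Ω] {P : Ω → ℝ} (hP : ∀ w, 0 ≤ P w) {S S' : Set Ω}
    (h : S ⊆ S') : prEv P S ≤ prEv P S' :=
  Finset.sum_le_sum fun w _ => Set.indicator_le_indicator_of_subset h hP w

lemma prEv_add_prEv_compl {Ω : Type*} [Fintype Ω] (P : Ω → ℝ) (S : Set Ω) :
    prEv P S + prEv P Sᶜ = ∑ w, P w := by
  simp only [prEv, ← Finset.sum_add_distrib, Set.indicator_self_add_compl_apply]

variable {W : ℕ → Type*} [∀ n, Fintype (W n)] {P Z : ∀ n, W n → ℝ} {m : ℝ}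

lemma tendsto_prEv_lt_of_lt (hP : ∀ n w, 0 ≤ P n w)
    (h : ∀ δ > 0, Tendsto (fun n => prEv (P n) {w | δ ≤ |Z n w - m|}) atTop (𝓝 0)) {α : ℝ}
    (hα : m < α) : Tendsto (fun n => prEv (P n) {w | α < Z n w}) atTop (𝓝 0) := by
  refine squeeze_zero (fun n => prEv_nonneg (hP n) _) (fun n => prEv_mono (hP n) ?_)
    (h (α - m) (sub_pos.mpr hα))
  intro w (hw : α < Z n w)
  exact (sub_le_sub_right hw.le m).trans (le_abs_self _)

lemma le_of_tendsto_prEv_lt (hP : ∀ n, P n ∈ stdSimplex ℝ (W n))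
    (h : ∀ δ > 0, Tendsto (fun n => prEv (P n) {w | δ ≤ |Z n w - m|}) atTop (𝓝 0)) {α : ℝ}
    (hα : Tendsto (fun n => prEv (P n) {w | α < Z n w}) atTop (𝓝 0)) : m ≤ α := by
  by_contra! hlt
  have hcover (n : ℕ) :
      1 ≤ prEv (P n) {w | α < Z n w} + prEv (P n) {w | m - α ≤ |Z n w - m|} := by
    rw [← (hP n).2, ← prEv_add_prEv_compl _ {w | α < Z n w}]
    gcongr
    refine prEv_mono (hP n).1 fun w hw => ?_
    have hw : Z n w ≤ α := not_lt.mp hw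
    have hsub : m - α ≤ m - Z n w := sub_le_sub_left hw m
    exact hsub.trans ((le_abs_self _).trans_eq (abs_sub_comm _ _))
  have hlim := ge_of_tendsto' (hα.add (h (m - α) (sub_pos.mpr hlt))) hcover
  norm_num at hlim

lemma pLimsupF_eq_of_tendsto_prEv (hP : ∀ n, P n ∈ stdSimplex ℝ (W n))
    (h : ∀ δ > 0, Tendsto (fun n => prEv (P n) {w | δ ≤ |Z n w - m|}) atTop (𝓝 0)) :
    pLimsupF P Z = m := by
  refine csInf_eq_of_forall_ge_of_forall_gt_exists_lt
    ⟨m + 1, tendsto_prEv_lt_of_lt (fun n => (hP n).1) h (lt_add_one m)⟩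
    (fun α hα => le_of_tendsto_prEv_lt hP h hα) fun α hα => ?_
  obtain ⟨β, hmβ, hβα⟩ := exists_between hα
  exact ⟨β, tendsto_prEv_lt_of_lt (fun n => (hP n).1) h hmβ, hβα⟩

lemma pLiminfF_eq_neg_pLimsupF_neg (P Z : ∀ n, W n → ℝ) :
    pLiminfF P Z = -pLimsupF P (fun n w => -Z n w) := by
  rw [pLiminfF, pLimsupF, Real.sInf_def, neg_neg]
  congr 1
  ext α
  simp only [Set.mem_neg, Set.mem_ofPred_eq, neg_lt_neg_iff]

lemma pLiminfF_eq_of_tendsto_prEv (hP : ∀ n, P n ∈ stdSimplex ℝ (W n))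
    (h : ∀ δ > 0, Tendsto (fun n => prEv (P n) {w | δ ≤ |Z n w - m|}) atTop (𝓝 0)) :
    pLiminfF P Z = m := by
  have hneg := pLimsupF_eq_of_tendsto_prEv (Z := fun n w => -Z n w) (m := -m) hP fun δ hδ => by
    simpa only [← neg_add', abs_neg, ← sub_eq_add_neg, neg_sub_neg, abs_sub_comm m] using h δ hδ
  rw [pLiminfF_eq_neg_pLimsupF_neg, hneg, neg_neg]

lemma prEv_probMass {Ω S : Type*} [MeasurableSpace Ω] {μ : Measure Ω} [IsFiniteMeasure μ]
    [Fintype S] [MeasurableSpace S] [MeasurableSingletonClass S] {X : Ω → S} (hX : Measurable X)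
    (B : Set S) : prEv (probMass μ X) B = μ.real (X ⁻¹' B) := by
  classical
  rw [← Set.coe_toFinset B, ← sum_measureReal_preimage_singleton _
    fun x _ => hX (measurableSet_singleton x), prEv]
  simp only [Finset.sum_indicator_subset, Finset.subset_univ, probMass]

end InProbability

section InformationDensity

variable {Ω S V : Type*} [MeasurableSpace Ω] {μ : Measure Ω}

/-- The information density `log (P_{XY}(x, y) / (P_X(x) P_Y(y)))`, whose mean at `(X, Y)` is the
mutual information `I(X; Y)`. -/
def infoDensity (μ : Measure Ω) (X : Ω → S) (Y : Ω → V) (x : S) (y : V) : ℝ :=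
  Real.log (probMass μ (fun ω => (X ω, Y ω)) (x, y) / (probMass μ X x * probMass μ Y y))

lemma infoDensity_ae_eq [Finite S] [Finite V] [IsFiniteMeasure μ] (X : Ω → S) (Y : Ω → V) :
    (fun ω => infoDensity μ X Y (X ω) (Y ω)) =ᵐ[μ]
      surprisal μ X + surprisal μ Y - surprisal μ fun ω => (X ω, Y ω) := by
  filter_upwards [ae_probMass_pos X, ae_probMass_pos Y, ae_probMass_pos fun ω => (X ω, Y ω)]
    with ω hX hY hXY
  rw [infoDensity, Real.log_div hXY.ne' (mul_pos hX hY).ne', Real.log_mul hX.ne' hY.ne']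
  simp only [Pi.sub_apply, Pi.add_apply, surprisal]
  ring

variable {T : Ω → Ω} {X : Ω → S} {Y : Ω → V}

lemma infoDensity_itinerary (X : Ω → S) (Y : Ω → V) (n : ℕ) (w : Fin n → S × V) :
    infoDensity μ (itinerary T X n) (itinerary T Y n) (fun i => (w i).1) (fun i => (w i).2) =
      Real.log (probMass μ (itinerary T (fun ω => (X ω, Y ω)) n) w /
        (probMass μ (itinerary T X n) (fun i => (w i).1) *
          probMass μ (itinerary T Y n) (fun i => (w i).2))) := by
  rw [infoDensity]
  congr 2
  have hunzip := (Equiv.arrowProdEquivProdArrow (Fin n) (fun _ => S) fun _ => V).injective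
  exact probMass_comp_of_injective hunzip (itinerary T (fun ω => (X ω, Y ω)) n) w

lemma surprisal_prodMk_itinerary (X : Ω → S) (Y : Ω → V) (n : ℕ) :
    surprisal μ (fun ω => (itinerary T X n ω, itinerary T Y n ω)) =
      surprisal μ (itinerary T (fun ω => (X ω, Y ω)) n) := by
  have hunzip := (Equiv.arrowProdEquivProdArrow (Fin n) (fun _ => S) fun _ => V).injective
  exact surprisal_comp_of_injective hunzip (itinerary T (fun ω => (X ω, Y ω)) n)

variable [Finite S] [MeasurableSpace S] [MeasurableSingletonClass S]
  [Finite V] [MeasurableSpace V] [MeasurableSingletonClass V]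

lemma integrable_infoDensity [IsFiniteMeasure μ] (hX : Measurable X) (hY : Measurable Y) :
    Integrable (fun ω => infoDensity μ X Y (X ω) (Y ω)) μ :=
  integrable_comp_of_finite (hX.prodMk hY) fun z => infoDensity μ X Y z.1 z.2

lemma exists_tendsto_infoDensity_itinerary [IsProbabilityMeasure μ] (hT : Ergodic T μ)
    (hX : Measurable X) (hY : Measurable Y) :
    ∃ I : ℝ, Tendsto (fun n : ℕ => (n : ℝ)⁻¹ • (integrable_infoDensity (μ := μ)
      (measurable_itinerary hT.measurable hX n) (measurable_itinerary hT.measurable hY n)).toL1 _)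
      atTop (𝓝 (Lp.const 1 μ I)) := by
  obtain ⟨rateX, hrateX⟩ := exists_tendsto_surprisal_itinerary hT hX
  obtain ⟨rateY, hrateY⟩ := exists_tendsto_surprisal_itinerary hT hY
  obtain ⟨rateXY, hrateXY⟩ := exists_tendsto_surprisal_itinerary hT (hX.prodMk hY)
  refine ⟨rateX + rateY - rateXY, ?_⟩
  rw [map_sub, map_add]
  refine ((hrateX.add hrateY).sub hrateXY).congr fun n => ?_
  rw [← smul_add, ← smul_sub, ← Integrable.toL1_add, ← Integrable.toL1_sub]
  congr 1
  rw [Integrable.toL1_eq_toL1_iff, ← surprisal_prodMk_itinerary]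
  exact (infoDensity_ae_eq _ _).symm

end InformationDensity

section L1Convergence

variable {Ω : Type*} [MeasurableSpace Ω] {μ : Measure Ω} {F : ℕ → Ω → ℝ}
  {hF : ∀ n, Integrable (F n) μ} {c : ℝ}

lemma tendsto_eLpNorm_of_tendsto_inv_smul_toL1 [IsFiniteMeasure μ]
    (h : Tendsto (fun n : ℕ => (n : ℝ)⁻¹ • (hF n).toL1) atTop (𝓝 (Lp.const 1 μ c))) :
    Tendsto (fun n : ℕ => eLpNorm ((fun ω => (n : ℝ)⁻¹ * F n ω) - fun _ => c) 1 μ) atTop (𝓝 0) :=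
  (Lp.tendsto_Lp_iff_tendsto_eLpNorm'' _
    (fun n => memLp_one_iff_integrable.mpr ((hF n).const_mul _)) _ (memLp_const c)).mp h

lemma tendsto_inv_mul_integral_of_tendsto_inv_smul_toL1 [IsProbabilityMeasure μ]
    (h : Tendsto (fun n : ℕ => (n : ℝ)⁻¹ • (hF n).toL1) atTop (𝓝 (Lp.const 1 μ c))) :
    Tendsto (fun n : ℕ => (n : ℝ)⁻¹ * ∫ ω, F n ω ∂μ) atTop (𝓝 c) := by
  simpa [integral_const_mul] using tendsto_integral_of_L1' _ aestronglyMeasurable_const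
    (.of_forall fun n => (hF n).const_mul _) (tendsto_eLpNorm_of_tendsto_inv_smul_toL1 h)

lemma tendsto_measureReal_of_tendsto_inv_smul_toL1 [IsFiniteMeasure μ]
    (h : Tendsto (fun n : ℕ => (n : ℝ)⁻¹ • (hF n).toL1) atTop (𝓝 (Lp.const 1 μ c))) {δ : ℝ}
    (hδ : 0 < δ) :
    Tendsto (fun n : ℕ => μ.real {ω | δ ≤ |(n : ℝ)⁻¹ * F n ω - c|}) atTop (𝓝 0) := by
  have hmeasure := tendstoInMeasure_of_tendsto_eLpNorm one_ne_zero
    (fun n => ((hF n).const_mul _).aestronglyMeasurable) aestronglyMeasurable_const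
    (tendsto_eLpNorm_of_tendsto_inv_smul_toL1 h)
  exact tendstoInMeasure_iff_measureReal_norm.mp hmeasure δ hδ

end L1Convergence

lemma shift_iterate_apply {α : Type*} (i j : ℕ) (ω : ℕ → α) : shift^[i] ω j = ω (j + i) := by
  induction i generalizing ω with
  | zero => rfl
  | succ i ih => rw [Function.iterate_succ_apply, ih, shift, add_assoc]

lemma probMass_itinerary {Ω A : Type*} [MeasurableSpace Ω] {μ : Measure Ω} {T : Ω → Ω} (f : Ω → A)
    (n : ℕ) (w : Fin n → A) :
    probMass μ (itinerary T f n) w = (μ {ω | ∀ i : Fin n, f (T^[i] ω) = w i}).toReal := by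
  simp only [probMass, Measure.real, Set.preimage, Set.mem_singleton_iff, funext_iff, itinerary]

theorem stationary_ergodic_spectral_mutual_information_general
    {Ω 𝒳 𝒰 : Type*} [Fintype 𝒳] [Fintype 𝒰] [MeasurableSpace Ω]
    [MeasurableSpace 𝒳] [MeasurableSingletonClass 𝒳]
    [MeasurableSpace 𝒰] [MeasurableSingletonClass 𝒰]
    {μ : Measure Ω} [IsProbabilityMeasure μ] {T : Ω → Ω} (hT : Ergodic T μ)
    {X : Ω → 𝒳} (hX : Measurable X) {U : Ω → 𝒰} (hU : Measurable U)
    (Pn : ∀ n : ℕ, (Fin n → 𝒳 × 𝒰) → ℝ)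
    (hPn : ∀ n w, Pn n w = (μ {ω | ∀ i : Fin n, (X (T^[i] ω), U (T^[i] ω)) = w i}).toReal)
    (PXn : ∀ n : ℕ, (Fin n → 𝒳) → ℝ)
    (hPXn : ∀ n x, PXn n x = (μ {ω | ∀ i : Fin n, X (T^[i] ω) = x i}).toReal)
    (PUn : ∀ n : ℕ, (Fin n → 𝒰) → ℝ)
    (hPUn : ∀ n u, PUn n u = (μ {ω | ∀ i : Fin n, U (T^[i] ω) = u i}).toReal)
    (Z : ∀ n : ℕ, (Fin n → 𝒳 × 𝒰) → ℝ)
    (hZ : ∀ n w, Z n w = (1 / (n : ℝ)) *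
      Real.log (Pn n w / (PXn n (fun i => (w i).1) * PUn n (fun i => (w i).2))))
    (In : ℕ → ℝ)
    (hIn : ∀ n, In n = ∑ w : Fin n → 𝒳 × 𝒰, Pn n w *
      Real.log (Pn n w / (PXn n (fun i => (w i).1) * PUn n (fun i => (w i).2)))) :
    ∃ MI : ℝ,
      Tendsto (fun n : ℕ => (1 / (n : ℝ)) * In n) atTop (nhds MI) ∧
      (∀ δ > (0 : ℝ),
        Tendsto (fun n => prEv (Pn n) {w | δ ≤ |Z n w - MI|}) atTop (nhds 0)) ∧
      pLimsupF Pn Z = MI ∧ pLiminfF Pn Z = MI := by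
  have hXU (n : ℕ) : Measurable (itinerary T (fun ω => (X ω, U ω)) n) :=
    measurable_itinerary hT.measurable (hX.prodMk hU) n
  have hP (n : ℕ) : Pn n = probMass μ (itinerary T (fun ω => (X ω, U ω)) n) :=
    by
    ext w
    rw [hPn, probMass_itinerary]
  have hdensity (n : ℕ) (w : Fin n → 𝒳 × 𝒰) :
      Real.log (Pn n w / (PXn n (fun i => (w i).1) * PUn n (fun i => (w i).2))) =
        infoDensity μ (itinerary T X n) (itinerary T U n) (fun i => (w i).1) fun i => (w i).2 := by
    simp only [infoDensity_itinerary, hP, hPXn, hPUn, probMass_itinerary]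
  have hmean (n : ℕ) : In n = ∫ ω, infoDensity μ (itinerary T X n) (itinerary T U n)
      (itinerary T X n ω) (itinerary T U n ω) ∂μ := by
    simp only [hIn, hdensity]
    rw [hP]
    exact (integral_comp_eq_sum_probMass (hXU n) _).symm
  obtain ⟨MI, hMI⟩ := exists_tendsto_infoDensity_itinerary hT hX hU
  have hprob (δ : ℝ) (hδ : 0 < δ) :
      Tendsto (fun n => prEv (Pn n) {w | δ ≤ |Z n w - MI|}) atTop (𝓝 0) := by
    simp only [hZ, hdensity, one_div]
    simp only [hP, prEv_probMass (hXU _)]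
    exact tendsto_measureReal_of_tendsto_inv_smul_toL1 hMI hδ
  have hsimplex (n : ℕ) : Pn n ∈ stdSimplex ℝ (Fin n → 𝒳 × 𝒰) :=
    hP n ▸ probMass_mem_stdSimplex (hXU n)
  refine ⟨MI, ?_, hprob, pLimsupF_eq_of_tendsto_prEv hsimplex hprob,
    pLiminfF_eq_of_tendsto_prEv hsimplex hprob⟩
  simpa only [hmean, one_div] using tendsto_inv_mul_integral_of_tendsto_inv_smul_toL1 hMI

/-- For a jointly stationary and ergodic process `(X_i, U_i)` on a finite alphabet,
the normalized information density converges in probability to the mutual information rate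
`lim (1/n) I(X^n; U^n)` (which exists); consequently the spectral sup- and inf-mutual
information rates coincide and equal the mutual information rate. -/
theorem stationary_ergodic_spectral_mutual_information
    {𝒳 𝒰 : Type*} [Fintype 𝒳] [Fintype 𝒰]
    [MeasurableSpace 𝒳] [DiscreteMeasurableSpace 𝒳]
    [MeasurableSpace 𝒰] [DiscreteMeasurableSpace 𝒰]
    (μ : Measure (ℕ → 𝒳 × 𝒰)) [IsProbabilityMeasure μ]
    (hErg : Ergodic shift μ)
    -- finite-dimensional distributions
    (Pn : ∀ n : ℕ, (Fin n → 𝒳 × 𝒰) → ℝ)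
    (hPn : ∀ n w, Pn n w = (μ {ω | ∀ i : Fin n, ω i = w i}).toReal)
    (PXn : ∀ n : ℕ, (Fin n → 𝒳) → ℝ)
    (hPXn : ∀ n x, PXn n x = (μ {ω | ∀ i : Fin n, (ω i).1 = x i}).toReal)
    (PUn : ∀ n : ℕ, (Fin n → 𝒰) → ℝ)
    (hPUn : ∀ n u, PUn n u = (μ {ω | ∀ i : Fin n, (ω i).2 = u i}).toReal)
    -- normalized information density (1/n) log (P_{U^n|X^n}(U^n|X^n) / P_{U^n}(U^n))
    (Z : ∀ n : ℕ, (Fin n → 𝒳 × 𝒰) → ℝ)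
    (hZ : ∀ n w, Z n w = (1 / (n : ℝ)) *
      Real.log (Pn n w / (PXn n (fun i => (w i).1) * PUn n (fun i => (w i).2))))
    -- mutual information I(X^n; U^n)
    (In : ℕ → ℝ)
    (hIn : ∀ n, In n = ∑ w : Fin n → 𝒳 × 𝒰, Pn n w *
      Real.log (Pn n w / (PXn n (fun i => (w i).1) * PUn n (fun i => (w i).2)))) :
    ∃ MI : ℝ,
      Tendsto (fun n : ℕ => (1 / (n : ℝ)) * In n) atTop (nhds MI) ∧
      (∀ δ > (0 : ℝ),
        Tendsto (fun n => prEv (Pn n) {w | δ ≤ |Z n w - MI|}) atTop (nhds 0)) ∧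
      pLimsupF Pn Z = MI ∧ pLiminfF Pn Z = MI :=
  stationary_ergodic_spectral_mutual_information_general hErg
    (X := fun ω => (ω 0).1) (measurable_fst.comp (measurable_pi_apply 0))
    (U := fun ω => (ω 0).2) (measurable_snd.comp (measurable_pi_apply 0))
    Pn (by simpa only [shift_iterate_apply, zero_add] using hPn)
    PXn (by simpa only [shift_iterate_apply, zero_add] using hPXn)
    PUn (by simpa only [shift_iterate_apply, zero_add] using hPUn) Z hZ In hIn

end
end
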